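/- For every integer h ≥ 1 and real ε > 0, if G is an edge-weighted K_h-minor-free graph, then the ε-scatter dimension of the shortest-path metric induced by G is at most (6c·(9ε⁻¹+2)^c)^(c+1), where c = C(h−2+2·⌈36h·ε⁻¹⌉, h−1) · (12+72ε⁻¹) · (h−1) and C(·,·) denotes the binomial coefficient. -/

import Mathlib

open scoped ENNReal

namespace ScatterDim

variable {V : Type}





/-- Total weight of a walk in an edge-weighted graph. -/
noncomputable def walkWeight {G : SimpleGraph V} (w : Sym2 V → ℝ≥0∞)
    {u v : V} (p : G.Walk u v) : ℝ≥0∞ :=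
  (p.edges.map w).sum

/-- Shortest-path metric of an edge-weighted graph: the infimum of the total
weights of walks between the two vertices. -/
noncomputable def gdist (G : SimpleGraph V) (w : Sym2 V → ℝ≥0∞) (u v : V) : ℝ≥0∞ :=
  ⨅ p : G.Walk u v, walkWeight w p

/-- Shortest-path distance measured within the subgraph induced on `S`
(`⊤` if one of the endpoints is not in `S`). -/
noncomputable def distOn (G : SimpleGraph V) (w : Sym2 V → ℝ≥0∞) (S : Set V)
    (u v : V) : ℝ≥0∞ :=
  ⨅ (hu : u ∈ S), ⨅ (hv : v ∈ S), ⨅ (p : (G.induce S).Walk ⟨u, hu⟩ ⟨v, hv⟩),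
    (p.edges.map (fun e => w (e.map Subtype.val))).sum

/-- Distance between two sets of vertices inside the subgraph induced on `S`. -/
noncomputable def setDistOn (G : SimpleGraph V) (w : Sym2 V → ℝ≥0∞) (S : Set V)
    (A B : Set V) : ℝ≥0∞ :=
  ⨅ a ∈ A, ⨅ b ∈ B, distOn G w S a b

/-- Distance from a point to a set. -/
noncomputable def pdist (G : SimpleGraph V) (w : Sym2 V → ℝ≥0∞) (u : V) (X : Set V) : ℝ≥0∞ :=
  ⨅ x ∈ X, gdist G w u x

/-- `Y` is weakly `r`-reachable from `X` (with respect to the partition `P`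
ordered by `le`): there is a path of total weight at most `r` from a vertex of `X`
to a vertex of `Y` in the subgraph induced on the union of the parts `Z` with `Y ⪯ Z`. -/
def WReach (G : SimpleGraph V) (w : Sym2 V → ℝ≥0∞) (P : Set (Set V))
    (le : Set V → Set V → Prop) (r : ℝ) (X Y : Set V) : Prop :=
  setDistOn G w (⋃₀ {Z | Z ∈ P ∧ le Y Z}) X Y ≤ ENNReal.ofReal r

/-- The weak coloring number of `G` with respect to the partition `P`
and the order `le`: the maximum over `X ∈ P` of the number of parts weakly
`r`-reachable from `X`. -/
noncomputable def wcol (G : SimpleGraph V) (w : Sym2 V → ℝ≥0∞) (P : Set (Set V))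
    (le : Set V → Set V → Prop) (r : ℝ) : ℕ :=
  ⨆ X ∈ P, {Y | Y ∈ P ∧ WReach G w P le r X Y}.ncard

/-- `le` is a total (linear) order on the collection `P`. -/
def IsLinearOrderOn {α : Type} (P : Set α) (le : α → α → Prop) : Prop :=
  (∀ X ∈ P, le X X) ∧
  (∀ X ∈ P, ∀ Y ∈ P, le X Y → le Y X → X = Y) ∧
  (∀ X ∈ P, ∀ Y ∈ P, ∀ Z ∈ P, le X Y → le Y Z → le X Z) ∧
  (∀ X ∈ P, ∀ Y ∈ P, le X Y ∨ le Y X)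

/-- An `ε`-ladder of width `r` and length `ℓ` in the metric `dist`. -/
def IsLadder (dist : V → V → ℝ≥0∞) (ε r : ℝ) (ℓ : ℕ) (x p : Fin ℓ → V) : Prop :=
  (∀ i j : Fin ℓ, j < i → dist (p j) (x i) ≤ ENNReal.ofReal r) ∧
  (∀ i : Fin ℓ, ENNReal.ofReal ((1 + ε) * r) < dist (p i) (x i))

/-- `G` contains the complete graph on `h` vertices as a minor, witnessed by
pairwise disjoint connected nonempty branch sets that are pairwise adjacent. -/
def HasCompleteMinor (G : SimpleGraph V) (h : ℕ) : Prop :=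
  ∃ B : Fin h → Set V,
    (∀ i, (G.induce (B i)).Connected) ∧
    (∀ i j, i ≠ j → Disjoint (B i) (B j)) ∧
    (∀ i j, i ≠ j → ∃ u ∈ B i, ∃ v ∈ B j, G.Adj u v)

/-- `(T, bag)` is a tree decomposition of `G`. -/
def IsTreeDecompOf {ι : Type} (G : SimpleGraph V) (T : SimpleGraph ι) (bag : ι → Set V) : Prop :=
  T.IsTree ∧
  (∀ u v : V, G.Adj u v → ∃ t, u ∈ bag t ∧ v ∈ bag t) ∧
  (∀ v : V, (T.induce {t | v ∈ bag t}).Connected)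

/-- `G` has treewidth at most `n`. -/
def TreewidthAtMost (G : SimpleGraph V) (n : ℕ) : Prop :=
  ∃ (ι : Type) (T : SimpleGraph ι) (bag : ι → Set V),
    IsTreeDecompOf G T bag ∧ ∀ t, (bag t).ncard ≤ n + 1

/-- `D` is an `r`-cover of the edge-weighted graph `(G, w)`. -/
def IsCover (G : SimpleGraph V) (w : Sym2 V → ℝ≥0∞) (r : ℝ) (D : Set (Set V)) : Prop :=
  ∀ v : V, ∃ A ∈ D, ∀ u : V, gdist G w v u ≤ ENNReal.ofReal r → u ∈ A

/-!
A buffered cop decomposition is built along the ladder, one supernode per round. The arena is the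
component in which the current sub-ladder lives. An active supernode that no longer touches it is
retired, and the later active supernodes absorb the part of the arena close to them, which then
buffers the arena from the retired one. The arena and the active supernodes form a complete minor,
so few supernodes are active. The skeleton of the next supernode is a union of geodesics from the
first surviving `p i` to contacts with the active supernodes. It has a sparse net, and by the
pigeonhole principle many of the remaining `x i` have the same distances, up to rounding, to the
points of the net. If the short walk from `p j` to such an `x i` came close to the skeleton, then
`p j` would be almost as close to `x j`, which contradicts the ladder property. So these walks avoid
the skeleton, and the sub-ladder survives the round.

Every surviving `x i` is close to all supernodes. Because of the buffers, a retired supernode is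
strictly further from `x i` than some later one, so when the supernodes are listed by their distance
to `x i`, every prefix has few suffix minima. This bounds the number of rounds by a binomial
coefficient. Real weights reduce to natural ones by truncating, scaling and rounding.
-/

section Walks

variable {V : Type*} {G : SimpleGraph V} {w : Sym2 V → ℕ} {S S' B : Set V} {d d' : ℕ}
  {o u v x z : V}

/-- The total weight of a walk, with weights in an arbitrary additive monoid. For weights in
`ℝ≥0∞` it is definitionally `walkWeight`; the combinatorial part uses weights in `ℕ`. -/
def cost {M : Type*} [AddCommMonoid M] (w : Sym2 V → M) (p : G.Walk u v) : M :=
  (p.edges.map w).sum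

section Cost

variable {M : Type*} [AddCommMonoid M] (w : Sym2 V → M)

lemma cost_nil : cost w (SimpleGraph.Walk.nil : G.Walk u u) = 0 := by
  simp only [cost, SimpleGraph.Walk.edges_nil, List.map_nil, List.sum_nil]

lemma cost_cons (h : G.Adj u v) (p : G.Walk v z) :
    cost w (.cons h p) = w s(u, v) + cost w p := by
  simp only [cost, SimpleGraph.Walk.edges_cons, List.map_cons, List.sum_cons]

lemma cost_append (p : G.Walk u v) (q : G.Walk v z) :
    cost w (p.append q) = cost w p + cost w q := by
  simp only [cost, SimpleGraph.Walk.edges_append, List.map_append, List.sum_append]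

lemma cost_reverse (p : G.Walk u v) : cost w p.reverse = cost w p := by
  simp only [cost, SimpleGraph.Walk.edges_reverse, List.map_reverse, List.sum_reverse]

end Cost

/-- `v` can be reached from `u` by a walk of weight at most `d` staying inside `S`: the distance
from `u` to `v` in the subgraph induced on `S` is at most `d`. -/
def ReachIn (G : SimpleGraph V) (w : Sym2 V → ℕ) (S : Set V) (d : ℕ) (u v : V) : Prop :=
  ∃ p : G.Walk u v, cost w p ≤ d ∧ ∀ z ∈ p.support, z ∈ S

namespace ReachIn

lemma refl (hu : u ∈ S) : ReachIn G w S 0 u u :=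
  ⟨.nil, (cost_nil w).le, by simpa using hu⟩

lemma symm : ReachIn G w S d u v → ReachIn G w S d v u := fun ⟨p, hpd, hpS⟩ ↦
  ⟨p.reverse, (cost_reverse w p).trans_le hpd, by simpa using hpS⟩

lemma trans : ReachIn G w S d u v → ReachIn G w S d' v z → ReachIn G w S (d + d') u z :=
  fun ⟨p, hpd, hpS⟩ ⟨q, hqd, hqS⟩ ↦
    ⟨p.append q, (cost_append w p q).trans_le (add_le_add hpd hqd), fun x hx ↦
      ((SimpleGraph.Walk.mem_support_append_iff p q).mp hx).elim (hpS x) (hqS x)⟩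

lemma mono (h : ReachIn G w S d u v) (hS : S ⊆ S') (hd : d ≤ d') : ReachIn G w S' d' u v :=
  h.imp fun _ ⟨hpd, hpS⟩ ↦ ⟨hpd.trans hd, fun z hz ↦ hS (hpS z hz)⟩

lemma left_mem : ReachIn G w S d u v → u ∈ S := fun ⟨p, _, hpS⟩ ↦ hpS _ p.start_mem_support

lemma right_mem (h : ReachIn G w S d u v) : v ∈ S := h.symm.left_mem

lemma of_adj (hu : u ∈ S) (hv : v ∈ S) (h : G.Adj u v) : ReachIn G w S (w s(u, v)) u v :=
  ⟨h.toWalk, by simp [cost, SimpleGraph.Adj.toWalk], by simp [SimpleGraph.Adj.toWalk, hu, hv]⟩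

end ReachIn

lemma exists_reachIn_of_mem_support (w : Sym2 V → ℕ) (p : G.Walk u v)
    (hp : ∀ z ∈ p.support, z ∈ S) (hz : z ∈ p.support) :
    ∃ d₁ d₂, ReachIn G w S d₁ u z ∧ ReachIn G w S d₂ z v ∧ d₁ + d₂ = cost w p := by
  classical
  refine ⟨_, _, ⟨p.takeUntil z hz, le_rfl, fun x hx ↦ ?_⟩,
    ⟨p.dropUntil z hz, le_rfl, fun x hx ↦ ?_⟩, ?_⟩
  · exact hp x (p.support_takeUntil_subset_support hz hx)
  · exact hp x (p.support_dropUntil_subset_support hz hx)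
  · rw [← cost_append, p.take_spec]

lemma ReachIn.diff_or_exists_first_hit (h : ReachIn G w S d x z) (hx : x ∉ B) :
    ReachIn G w (S \ B) d x z ∨ ∃ y, ∃ a ∈ B, G.Adj y a ∧ ∃ d₁ d₂, ReachIn G w (S \ B) d₁ x y ∧
      ReachIn G w S d₂ a z ∧ d₁ + w s(y, a) + d₂ ≤ d := by
  obtain ⟨p, hpd, hpS⟩ := h
  induction p generalizing d with
  | @nil x =>
    have hxS : x ∈ S \ B := ⟨hpS x (by simp), hx⟩
    exact .inl ((refl hxS).mono subset_rfl d.zero_le)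
  | @cons x b _ hxb p ih =>
    have hxS : x ∈ S \ B := ⟨hpS x (by simp), hx⟩
    have hpS' : ∀ z ∈ p.support, z ∈ S := fun z hz ↦ hpS z (List.mem_cons_of_mem _ hz)
    rw [cost_cons] at hpd
    by_cases hb : b ∈ B
    · exact .inr ⟨x, b, hb, hxb, 0, _, refl hxS, ⟨p, le_rfl, hpS'⟩, by omega⟩
    rcases ih hb (d := d - w s(x, b)) (by omega) hpS' with
      hbz | ⟨y, a, ha, hya, d₁, d₂, hby, haz, hd⟩
    · exact .inl (((of_adj hxS hbz.left_mem hxb).trans hbz).mono subset_rfl (by omega))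
    · exact .inr ⟨y, a, ha, hya, _, d₂, (of_adj hxS hby.left_mem hxb).trans hby, haz, by omega⟩

lemma ReachIn.exists_first_hit (h : ReachIn G w S d x z) (hx : x ∉ B) (hz : z ∈ B) :
    ∃ y, ∃ a ∈ B, G.Adj y a ∧ ∃ d₁ d₂, ReachIn G w (S \ B) d₁ x y ∧ ReachIn G w S d₂ a z ∧
      d₁ + w s(y, a) + d₂ ≤ d :=
  (h.diff_or_exists_first_hit hx).resolve_left fun h' ↦ h'.right_mem.2 hz

/-- The vertex set of the connected component of `o` in the subgraph induced on `S`. -/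
def component (G : SimpleGraph V) (S : Set V) (o : V) : Set V :=
  {z | ∃ p : G.Walk o z, ∀ x ∈ p.support, x ∈ S}

lemma component_subset : component G S o ⊆ S := fun _ ⟨p, hp⟩ ↦ hp _ p.end_mem_support

lemma mem_component_self (ho : o ∈ S) : o ∈ component G S o := ⟨.nil, by simpa using ho⟩

lemma support_subset_component (hu : u ∈ component G S o) (p : G.Walk u v)
    (hp : ∀ x ∈ p.support, x ∈ S) (hx : x ∈ p.support) : x ∈ component G S o := by
  classical
  obtain ⟨q, hq⟩ := hu
  refine ⟨q.append (p.takeUntil x hx), fun y hy ↦ ?_⟩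
  rcases (SimpleGraph.Walk.mem_support_append_iff _ _).mp hy with hy | hy
  exacts [hq y hy, hp y (p.support_takeUntil_subset_support hx hy)]

lemma ReachIn.inter_component (h : ReachIn G w S d u v) (hS : S ⊆ S')
    (hu : u ∈ component G S' o) : ReachIn G w (S ∩ component G S' o) d u v :=
  h.imp fun p hp ↦ ⟨hp.1, fun x hx ↦
    ⟨hp.2 x hx, support_subset_component hu p (fun y hy ↦ hS (hp.2 y hy)) hx⟩⟩

lemma mem_component_of_adj (hu : u ∈ component G S o) (hv : v ∈ S) (h : G.Adj u v) :
    v ∈ component G S o :=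
  support_subset_component hu h.toWalk
    (by simpa [SimpleGraph.Adj.toWalk] using ⟨component_subset hu, hv⟩)
    h.toWalk.end_mem_support

lemma exists_walk_of_connected_induce (hS : (G.induce S).Connected) (hu : u ∈ S) (hv : v ∈ S) :
    ∃ p : G.Walk u v, ∀ x ∈ p.support, x ∈ S := by
  obtain ⟨p⟩ := hS.preconnected ⟨u, hu⟩ ⟨v, hv⟩
  have hsupport := SimpleGraph.Walk.support_map (SimpleGraph.Embedding.induce S).toHom p
  refine ⟨p.map (SimpleGraph.Embedding.induce S).toHom, fun x hx ↦ ?_⟩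
  obtain ⟨y, -, rfl⟩ := List.mem_map.mp (hsupport ▸ hx)
  exact y.2

lemma connected_induce_of_forall_exists_walk {A : Set V} (hA : (G.induce A).Connected)
    (hAS : A ⊆ S) (h : ∀ v ∈ S, ∃ a ∈ A, ∃ p : G.Walk a v, ∀ x ∈ p.support, x ∈ S) :
    (G.induce S).Connected := by
  obtain ⟨⟨o, ho⟩⟩ := hA.nonempty
  refine SimpleGraph.induce_connected_of_patches o (hAS ho) fun {v} hv ↦ ?_
  obtain ⟨a, ha, p, hp⟩ := h v hv
  have hunion : (G.induce (A ∪ {x | x ∈ p.support})).Connected :=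
    SimpleGraph.induce_union_connected hA.preconnected p.connected_induce_support.preconnected
      ⟨a, ha, p.start_mem_support⟩
  exact ⟨_, Set.union_subset hAS hp, .inl ho, .inr p.end_mem_support, hunion.preconnected _ _⟩

lemma connected_induce_component (ho : o ∈ S) : (G.induce (component G S o)).Connected := by
  refine SimpleGraph.induce_connected_of_patches o (mem_component_self ho) fun {v} ⟨p, hp⟩ ↦ ?_
  exact ⟨{x | x ∈ p.support}, fun x ↦ support_subset_component (mem_component_self ho) p hp,
    p.start_mem_support, p.end_mem_support, p.connected_induce_support.preconnected _ _⟩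

/-- Some edge of `G` joins the two vertex sets. -/
def Touch (G : SimpleGraph V) (S T : Set V) : Prop := ∃ a ∈ S, ∃ b ∈ T, G.Adj a b

lemma Touch.symm {T : Set V} : Touch G S T → Touch G T S :=
  fun ⟨a, ha, b, hb, h⟩ ↦ ⟨b, hb, a, ha, h.symm⟩

lemma Touch.mono {T T' : Set V} (hS : S ⊆ S') (hT : T ⊆ T') : Touch G S T → Touch G S' T' :=
  fun ⟨a, ha, b, hb, h⟩ ↦ ⟨a, hS ha, b, hT hb, h⟩

end Walks

section Minors

variable {G : SimpleGraph V} {h h' : ℕ}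

lemma HasCompleteMinor.mono (hG : HasCompleteMinor G h') (hh : h ≤ h') : HasCompleteMinor G h := by
  obtain ⟨B, hconn, hdisj, htouch⟩ := hG
  have hinj := Fin.castLE_injective hh
  exact ⟨B ∘ Fin.castLE hh, fun i ↦ hconn _, fun i j hij ↦ hdisj _ _ (hinj.ne hij),
    fun i j hij ↦ htouch _ _ (hinj.ne hij)⟩

lemma hasCompleteMinor_zero : HasCompleteMinor G 0 :=
  ⟨fun _ ↦ ∅, fun i ↦ i.elim0, fun i ↦ i.elim0, fun i ↦ i.elim0⟩

lemma hasCompleteMinor_one (v : V) : HasCompleteMinor G 1 :=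
  ⟨fun _ ↦ {v}, fun _ ↦ { preconnected := .of_subsingleton },
    fun i j hij ↦ absurd (Subsingleton.elim i j) hij,
    fun i j hij ↦ absurd (Subsingleton.elim i j) hij⟩

lemma hasCompleteMinor_card {ι : Type*} [Fintype ι] (B : ι → Set V)
    (hconn : ∀ i, (G.induce (B i)).Connected) (hdisj : ∀ i j, i ≠ j → Disjoint (B i) (B j))
    (htouch : ∀ i j, i ≠ j → Touch G (B i) (B j)) : HasCompleteMinor G (Fintype.card ι) :=
  have hinj := (Fintype.equivFin ι).symm.injective
  ⟨B ∘ (Fintype.equivFin ι).symm, fun _ ↦ hconn _, fun _ _ hij ↦ hdisj _ _ (hinj.ne hij),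
    fun _ _ hij ↦ htouch _ _ (hinj.ne hij)⟩

end Minors

section SuffixMinima

/-- The positions of the suffix minima of the word `e l, …, e (m - 1)`, equal values included. -/
def suffixMinima (e : ℕ → ℕ) (l m : ℕ) : Finset ℕ :=
  {t ∈ Finset.Ico l m | ∀ u ∈ Finset.Ioo t m, e t ≤ e u}

variable {e : ℕ → ℕ} {b k n l m t : ℕ}

lemma mem_suffixMinima :
    t ∈ suffixMinima e l m ↔ (l ≤ t ∧ t < m) ∧ ∀ u, t < u → u < m → e t ≤ e u := by
  simp only [suffixMinima, Finset.mem_filter, Finset.mem_Ico, Finset.mem_Ioo, and_imp]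

lemma suffixMinima_anti {l' : ℕ} (h : l ≤ l') : suffixMinima e l' m ⊆ suffixMinima e l m :=
  fun _ ht ↦ have ht := mem_suffixMinima.mp ht
    mem_suffixMinima.mpr ⟨⟨h.trans ht.1.1, ht.1.2⟩, ht.2⟩

lemma succ_card_suffixMinima_le (hlt : l ≤ t) (htm : t < m)
    (ht : ∀ u, t < u → u < m → e t ≤ e u) :
    (suffixMinima e (t + 1) m).card + 1 ≤ (suffixMinima e l m).card := by
  have hnotmem : t ∉ suffixMinima e (t + 1) m :=
    fun h ↦ t.lt_irrefl (mem_suffixMinima.mp h).1.1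
  rw [← Finset.card_insert_of_notMem hnotmem]
  refine Finset.card_le_card (Finset.insert_subset ?_ (suffixMinima_anti (by omega)))
  exact mem_suffixMinima.mpr ⟨⟨hlt, htm⟩, ht⟩

theorem length_succ_le_choose_of_card_suffixMinima_le (hlm : l ≤ m)
    (he : ∀ t, l ≤ t → t < m → b ≤ e t ∧ e t < b + n)
    (hk : ∀ m', l ≤ m' → m' ≤ m → (suffixMinima e l m').card ≤ k) :
    m - l + 1 ≤ (n + k).choose k := by
  induction k generalizing b n l m with
  | zero =>
    obtain rfl | hlt := hlm.eq_or_lt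
    · simp
    have hmem := succ_card_suffixMinima_le (e := e) (m := l + 1) le_rfl l.lt_succ_self (by omega)
    have := hk (l + 1) (by omega) hlt
    omega
  | succ k ihk =>
    induction n generalizing b l m with
    | zero =>
      obtain rfl | hlt := hlm.eq_or_lt
      · simp
      · have := he l le_rfl hlt
        omega
    | succ n ihn =>
      by_cases hb : ∃ t, l ≤ t ∧ t < m ∧ e t = b
      swap
      · push Not at hb
        have hle := ihn (b := b + 1) hlm (fun t hlt htm ↦ by
          have := he t hlt htm; have := hb t hlt htm; omega) hk
        exact hle.trans (Nat.choose_le_choose _ (by omega))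
      -- Split at the first occurrence `t` of the least value: `t` is a suffix minimum of every
      -- longer prefix, so the part after `t` may use one suffix minimum fewer.
      obtain ⟨⟨hlt, htm, htb⟩, hfirst⟩ :=
        And.intro (Nat.find_spec hb) fun s ↦ Nat.find_min hb (m := s)
      generalize Nat.find hb = t at hlt htm htb hfirst
      have hleft : t - l + 1 ≤ (n + (k + 1)).choose (k + 1) :=
        ihn (b := b + 1) hlt (fun s hls hst ↦ by
            have := he s hls (by omega)
            have : e s ≠ b := fun h ↦ hfirst s hst ⟨hls, by omega, h⟩
            omega)
          fun m' hlm' hm' ↦ hk m' hlm' (by omega)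
      have hright : m - (t + 1) + 1 ≤ (n + 1 + k).choose k :=
        ihk (b := b) htm (fun s hs hsm ↦ he s (by omega) hsm) fun m' hm' hm'm ↦ by
          have := hk m' (by omega) hm'm
          have := succ_card_suffixMinima_le (e := e) hlt (m := m') (by omega)
            fun u hu hum ↦ htb ▸ (he u (by omega) (by omega)).1
          omega
      have hpascal := Nat.choose_succ_succ' (n + 1 + k) k
      rw [show n + 1 + (k + 1) = n + 1 + k + 1 by omega]
      rw [show n + (k + 1) = n + 1 + k by omega] at hleft
      omega

end SuffixMinima

section Voronoi

variable {V ι : Type*} [LinearOrder ι] {G : SimpleGraph V} {w : Sym2 V → ℕ} {β d d' : ℕ}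
  {C : Set V} {B : ι → Set V} {M : Set ι} {u u' : ι} {v b : V}

/-- The distance from `v` to the set `B`, measured inside `C ∪ B`, is at most `d`. -/
def Hits (G : SimpleGraph V) (w : Sym2 V → ℕ) (C B : Set V) (v : V) (d : ℕ) : Prop :=
  ∃ a ∈ B, ReachIn G w (C ∪ B) d v a

/-- Among the sets `B i` with `i ∈ M`, the set `B u` is the nearest one to `v`, at distance `d`;
ties are broken in favour of the least index. -/
def IsNearest (G : SimpleGraph V) (w : Sym2 V → ℕ) (C : Set V) (B : ι → Set V) (M : Set ι)
    (v : V) (d : ℕ) (u : ι) : Prop :=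
  u ∈ M ∧ Hits G w C (B u) v d ∧
    ∀ u' ∈ M, ∀ d', Hits G w C (B u') v d' → toLex (d, u) ≤ toLex (d', u')

/-- The Voronoi cell of `B u`, truncated at radius `β`: the vertices of `C` at distance less than
`β` from `B u` whose nearest set is `B u`. -/
def voronoiCell (G : SimpleGraph V) (w : Sym2 V → ℕ) (β : ℕ) (C : Set V) (B : ι → Set V)
    (M : Set ι) (u : ι) : Set V :=
  {v ∈ C | ∃ d < β, IsNearest G w C B M v d u}

lemma Hits.cons {B : Set V} (h : Hits G w C B b d) (hv : v ∈ C) (hvb : G.Adj v b) :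
    Hits G w C B v (w s(v, b) + d) :=
  h.imp fun _ ⟨ha, hba⟩ ↦ ⟨ha, (ReachIn.of_adj (.inl hv) hba.left_mem hvb).trans hba⟩

lemma Hits.exists_isNearest [WellFoundedLT ι] (h : Hits G w C (B u) v d) (hu : u ∈ M) :
    ∃ d' ≤ d, ∃ u', IsNearest G w C B M v d' u' := by
  let hits : Set (ℕ ×ₗ ι) := {q | (ofLex q).2 ∈ M ∧ Hits G w C (B (ofLex q).2) v (ofLex q).1}
  have hmem : toLex (d, u) ∈ hits := ⟨hu, h⟩
  obtain ⟨q, ⟨hqM, hq⟩, hmin⟩ := WellFounded.has_min wellFounded_lt hits ⟨_, hmem⟩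
  refine ⟨(ofLex q).1, ?_, (ofLex q).2, hqM, hq, fun u' hu' d' h' ↦ not_lt.mp (hmin _ ⟨hu', h'⟩)⟩
  rcases Prod.Lex.le_iff.mp (not_lt.mp (hmin _ hmem)) with hlt | ⟨heq, -⟩
  exacts [hlt.le, heq.le]

lemma IsNearest.unique (h : IsNearest G w C B M v d u) (h' : IsNearest G w C B M v d' u') :
    u = u' :=
  congrArg (fun q ↦ (ofLex q).2)
    (le_antisymm (h.2.2 u' h'.1 d' h'.2.1) (h'.2.2 u h.1 d h.2.1))

lemma IsNearest.of_cons (h : IsNearest G w C B M v (w s(v, b) + d) u) (hv : v ∈ C)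
    (hvb : G.Adj v b) (hb : Hits G w C (B u) b d) : IsNearest G w C B M b d u := by
  refine ⟨h.1, hb, fun u' hu' d' h' ↦ ?_⟩
  have hle := h.2.2 u' hu' _ (h'.cons hv hvb)
  rw [Prod.Lex.toLex_le_toLex] at hle ⊢
  simpa only [add_lt_add_iff_left, add_right_inj] using hle

lemma voronoiCell_subset : voronoiCell G w β C B M u ⊆ C := fun _ hv ↦ hv.1

lemma mem_of_mem_voronoiCell (hv : v ∈ voronoiCell G w β C B M u) : u ∈ M := by
  obtain ⟨-, _, -, hu, -⟩ := hv
  exact hu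

lemma disjoint_voronoiCell (h : u ≠ u') :
    Disjoint (voronoiCell G w β C B M u) (voronoiCell G w β C B M u') :=
  Set.disjoint_left.mpr fun _ ⟨_, _, _, hu⟩ ⟨_, _, _, hu'⟩ ↦ h (hu.unique hu')

lemma Hits.exists_mem_voronoiCell [WellFoundedLT ι] (h : Hits G w C (B u) v d) (hu : u ∈ M)
    (hv : v ∈ C) (hd : d < β) : ∃ u', v ∈ voronoiCell G w β C B M u' :=
  have ⟨d', hd', u', hu'⟩ := h.exists_isNearest hu
  ⟨u', hv, d', hd'.trans_lt hd, hu'⟩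

-- A shortest walk from `v` to `B u` never leaves the cell before reaching `B u`: the nearest set of
-- each of its vertices is again `B u`.
lemma exists_reachIn_of_mem_voronoiCell (hv : v ∈ voronoiCell G w β C B M u) :
    ∃ a ∈ B u, ReachIn G w (B u ∪ voronoiCell G w β C B M u) β v a := by
  obtain ⟨hvC, d, hdβ, hnear⟩ := hv
  obtain ⟨a, ha, p, hpd, hp⟩ := hnear.2.1
  suffices hcell : ∃ a ∈ B u, ReachIn G w (B u ∪ voronoiCell G w β C B M u) d v a by
    exact hcell.imp fun a h ↦ ⟨h.1, h.2.mono subset_rfl hdβ.le⟩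
  induction p generalizing d with
  | nil => exact ⟨_, ha, (ReachIn.refl (.inl ha)).mono subset_rfl d.zero_le⟩
  | @cons v b a hvb p ih =>
    have hvcell : v ∈ voronoiCell G w β C B M u := ⟨hvC, d, hdβ, hnear⟩
    have hp' : ∀ z ∈ p.support, z ∈ C ∪ B u := fun z hz ↦ hp z (List.mem_cons_of_mem _ hz)
    rw [cost_cons] at hpd
    rcases hp' b p.start_mem_support with hbC | hbB
    · have hb : Hits G w C (B u) b (d - w s(v, b)) := ⟨a, ha, p, by omega, hp'⟩
      obtain ⟨e, rfl⟩ : ∃ e, d = w s(v, b) + e := ⟨d - w s(v, b), by omega⟩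
      rw [Nat.add_sub_cancel_left] at hb
      obtain ⟨a', ha', hba'⟩ := ih hbC e (by omega) (hnear.of_cons hvC hvb hb) ha (by omega) hp'
      exact ⟨a', ha', (ReachIn.of_adj (.inr hvcell) hba'.left_mem hvb).trans hba'⟩
    · exact ⟨b, hbB, (ReachIn.of_adj (.inr hvcell) (.inl hbB) hvb).mono subset_rfl (by omega)⟩

end Voronoi

section Supernodes

/-- A supernode of a buffered cop decomposition: a connected set `carrier`, created inside the
region `domain` as a connected set `skeleton` and possibly enlarged later. -/
structure Supernode (V : Type*) where
  domain : Set V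
  skeleton : Set V
  carrier : Set V

variable {V : Type*} {G : SimpleGraph V} {w : Sym2 V → ℕ} {β d m m' t : ℕ}
  {A A' : ℕ → Supernode V} {C C' : Set V} {x : V}

/-- The vertices at distance at most `d` from the skeleton, measured inside the domain. -/
def Supernode.thickening (c : Supernode V) (G : SimpleGraph V) (w : Sym2 V → ℕ) (d : ℕ) : Set V :=
  {z | ∃ s ∈ c.skeleton, ReachIn G w c.domain d s z}

/-- The supernode with carrier enlarged by `D`. -/
def Supernode.grow (c : Supernode V) (D : Set V) : Supernode V :=
  {c with carrier := c.carrier ∪ D}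

lemma Supernode.thickening_mono {c : Supernode V} {d' : ℕ} (h : d ≤ d') :
    c.thickening G w d ⊆ c.thickening G w d' :=
  fun _ ⟨s, hs, hsz⟩ ↦ ⟨s, hs, hsz.mono subset_rfl h⟩

lemma Supernode.thickening_subset_domain {c : Supernode V} : c.thickening G w d ⊆ c.domain :=
  fun _ ⟨_, _, hsz⟩ ↦ hsz.right_mem

lemma Supernode.carrier_grow_subset_thickening {c : Supernode V} {D : Set V}
    (hc : c.carrier ⊆ c.thickening G w d) (hD : D ⊆ c.domain)
    (hreach : ∀ v ∈ D, ∃ a ∈ c.carrier, ReachIn G w (c.carrier ∪ D) β v a) :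
    (c.grow D).carrier ⊆ (c.grow D).thickening G w (d + β) := by
  refine Set.union_subset (hc.trans (thickening_mono (Nat.le_add_right d β))) fun v hv ↦ ?_
  obtain ⟨a, ha, hva⟩ := hreach v hv
  obtain ⟨s, hs, hsa⟩ := hc ha
  have hsubset := Set.union_subset (hc.trans thickening_subset_domain) hD
  exact ⟨s, hs, hsa.trans (hva.symm.mono hsubset le_rfl)⟩

lemma Supernode.connected_carrier_grow {c : Supernode V} {D : Set V}
    (hc : (G.induce c.carrier).Connected)
    (hreach : ∀ v ∈ D, ∃ a ∈ c.carrier, ReachIn G w (c.carrier ∪ D) β v a) :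
    (G.induce (c.grow D).carrier).Connected := by
  refine connected_induce_of_forall_exists_walk hc Set.subset_union_left ?_
  rintro v (hv | hv)
  · exact ⟨v, hv, .nil, by simpa using .inl hv⟩
  · obtain ⟨a, ha, hva⟩ := hreach v hv
    obtain ⟨p, -, hp⟩ := hva.symm
    exact ⟨a, ha, p, hp⟩

/-- Some walk of weight at most `d` from `x`, avoiding the supernodes up to index `t`, ends next to
supernode `t`; the last edge, into supernode `t`, is not counted. -/
def Approaches (G : SimpleGraph V) (w : Sym2 V → ℕ) (A : ℕ → Supernode V) (x : V) (t d : ℕ) :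
    Prop :=
  ∃ y, ReachIn G w {z | ∀ u ≤ t, z ∉ (A u).carrier} d x y ∧ ∃ a ∈ (A t).carrier, G.Adj y a

/-- Among the first `m` supernodes, supernode `t` is retired with respect to the arena `C`: the
arena lies in a region separated from `t` by the other supernodes (separation property), and all
walks from this region to `t` avoiding the supernodes up to `t` are long (buffer property). -/
def IsRetired (G : SimpleGraph V) (w : Sym2 V → ℕ) (β : ℕ) (A : ℕ → Supernode V) (C : Set V)
    (t m : ℕ) : Prop :=
  ∃ K, C ⊆ K ∧
    (∀ v ∈ K, ∀ z ∉ K, G.Adj v z → ∃ u < m, u ≠ t ∧ z ∈ (A u).carrier) ∧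
    ∀ y ∈ K, ∀ d, Approaches G w A y t d → β ≤ d

lemma IsRetired.mono (h : IsRetired G w β A C t m) (htm : t < m) (hm : m ≤ m') (hC : C' ⊆ C)
    (hA : ∀ u < m, (A u).carrier ⊆ (A' u).carrier) (ht : (A' t).carrier = (A t).carrier) :
    IsRetired G w β A' C' t m' := by
  obtain ⟨K, hCK, hsep, hbuffer⟩ := h
  refine ⟨K, hC.trans hCK, fun v hv z hz hvz ↦ ?_, fun y hy d ⟨b, hyb, a, ha, hba⟩ ↦ ?_⟩
  · obtain ⟨u, hum, hut, hzu⟩ := hsep v hv z hz hvz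
    exact ⟨u, hum.trans_le hm, hut, hA u hum hzu⟩
  · have hyb' := hyb.mono (S' := {z | ∀ u ≤ t, z ∉ (A u).carrier})
      (fun z hz u hut hzu ↦ hz u hut (hA u (hut.trans_lt htm) hzu)) le_rfl
    exact hbuffer y hy d ⟨b, hyb', a, ht ▸ ha, hba⟩

-- A walk from `x` towards the retired supernode `t` must first meet some later supernode `u`, and
-- it does so before crossing the buffer of `t`.
lemma IsRetired.exists_approaches (h : IsRetired G w β A C t m) (hβ : 1 ≤ β)
    (hxC : x ∈ C) (hx : ∀ u < m, x ∉ (A u).carrier) (hxt : Approaches G w A x t d) :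
    ∃ u, t < u ∧ u < m ∧ ∃ d', Approaches G w A x u d' ∧ d' + β ≤ d := by
  obtain ⟨K, hCK, hsep, hbuffer⟩ := h
  have hinside {b : V} {d' : ℕ} (hxb : ReachIn G w {z | ∀ u < m, z ∉ (A u).carrier} d' x b) :
      b ∈ K := by
    by_contra hb
    obtain ⟨y, z, hzK, hyz, _, _, hxy, hz, -⟩ :=
      hxb.exists_first_hit (B := Kᶜ) (not_not.mpr (hCK hxC)) hb
    obtain ⟨u, hum, -, hzu⟩ := hsep y (not_not.mp hxy.right_mem.2) z hzK hyz
    exact hz.left_mem u hum hzu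
  have hxm : x ∉ ⋃ u < m, (A u).carrier := by simpa using hx
  obtain ⟨y, hxy, a, ha, hya⟩ := hxt
  rcases hxy.diff_or_exists_first_hit hxm with hxy' | ⟨b, z, hz, hbz, d₁, d₂, hxb, hzy, hd⟩
  · have hyt : Approaches G w A y t 0 := ⟨y, .refl hxy.right_mem, a, ha, hya⟩
    have := hbuffer y (hinside (hxy'.mono (fun v hv ↦ by simpa using hv.2) le_rfl)) 0 hyt
    omega
  · obtain ⟨u, hum, hzu⟩ := Set.mem_iUnion₂.mp hz
    have htu : t < u := not_le.mp fun hut ↦ hzy.left_mem u hut hzu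
    have hxb' : ReachIn G w {z | ∀ u < m, z ∉ (A u).carrier} d₁ x b :=
      hxb.mono (fun v hv ↦ by simpa using hv.2) le_rfl
    have hbt : Approaches G w A b t (w s(b, z) + d₂) :=
      ⟨y, (ReachIn.of_adj hxb.right_mem.1 hzy.left_mem hbz).trans hzy, a, ha, hya⟩
    have hbβ := hbuffer b (hinside hxb') _ hbt
    have hxb_u := hxb'.mono (S' := {z | ∀ u' ≤ u, z ∉ (A u').carrier})
      (fun v hv u' hu' ↦ hv u' (hu'.trans_lt hum)) le_rfl
    exact ⟨u, htu, hum, d₁, ⟨b, hxb_u, z, hzu, hbz⟩, by omega⟩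

end Supernodes

section PartialDecomposition

variable {V : Type*} {G : SimpleGraph V} {w : Sym2 V → ℕ} {β k m t : ℕ}
  {A : ℕ → Supernode V} {N : Finset ℕ} {C T : Set V} {o : V}

/-- A buffered cop decomposition under construction: the supernodes `A t` with `t < m` have been
created, those with index in `N` are still active (an active supernode may grow and bounds the
arena, the others are retired for good), and `C` is the arena, the connected region where the next
supernode is created. -/
structure IsPartialDecomposition (G : SimpleGraph V) (w : Sym2 V → ℕ) (β k m : ℕ)
    (A : ℕ → Supernode V) (N : Finset ℕ) (C : Set V) : Prop where
  arena_connected : (G.induce C).Connected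
  lt_of_mem : ∀ t ∈ N, t < m
  arena_subset : ∀ t < m, C ⊆ (A t).domain
  disjoint_arena : ∀ t < m, Disjoint C (A t).carrier
  skeleton_subset : ∀ t < m, (A t).skeleton ⊆ (A t).carrier
  connected : ∀ t < m, (G.induce (A t).carrier).Connected
  -- `ρ` counts the enlargements of supernode `t`; each was paid for by the retirement of an active
  -- supernode with smaller index.
  radius : ∀ t < m, ∃ ρ, ρ + (N.filter (· < t)).card ≤ k ∧
    (A t).carrier ⊆ (A t).thickening G w (ρ * β)
  disjoint : ∀ t < m, ∀ u < m, t ≠ u → Disjoint (A t).carrier (A u).carrier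
  touch : ∀ t ∈ N, ∀ u ∈ N, t ≠ u → Touch G (A t).carrier (A u).carrier
  boundary : ∀ v ∈ C, ∀ z ∉ C, G.Adj v z → ∃ u ∈ N, z ∈ (A u).carrier
  retired : ∀ t < m, t ∉ N → IsRetired G w β A C t m
  -- When supernode `m'` was created, at most `k` of the earlier supernodes were still active.
  history : ∀ m' < m, ∃ M : Finset ℕ, M.card ≤ k ∧
    ∀ t < m', t ∉ M → t ∉ N ∧ IsRetired G w β A C t m'

namespace IsPartialDecomposition

lemma initial (hC : (G.induce C).Connected) (hclosed : ∀ v ∈ C, ∀ z, G.Adj v z → z ∈ C)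
    (A : ℕ → Supernode V) : IsPartialDecomposition G w β k 0 A ∅ C where
  arena_connected := hC
  lt_of_mem := by simp
  arena_subset := by simp
  disjoint_arena := by simp
  skeleton_subset := by simp
  connected := by simp
  radius := by simp
  disjoint := by simp
  touch := by simp
  boundary v hv z hz hvz := absurd (hclosed v hv z hvz) hz
  retired := by simp
  history := by simp

lemma carrier_subset_thickening (h : IsPartialDecomposition G w β k m A N C) (ht : t < m) :
    (A t).carrier ⊆ (A t).thickening G w (k * β) := by
  obtain ⟨ρ, hρ, hsubset⟩ := h.radius t ht
  exact hsubset.trans (Supernode.thickening_mono (Nat.mul_le_mul_right β (by omega)))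

end IsPartialDecomposition

section Retire

variable {u v : ℕ}

/-- When the active supernode `t` retires, the part of the arena that is absorbed by supernode `u`:
its Voronoi cell of radius `β` among the active supernodes with index greater than `t`. -/
def absorbed (G : SimpleGraph V) (w : Sym2 V → ℕ) (β : ℕ) (A : ℕ → Supernode V) (N : Finset ℕ)
    (C : Set V) (t u : ℕ) : Set V :=
  voronoiCell G w β C (fun u ↦ (A u).carrier) {u | u ∈ N ∧ t < u} u

/-- The supernodes after the retirement of supernode `t`. -/
def grown (G : SimpleGraph V) (w : Sym2 V → ℕ) (β : ℕ) (A : ℕ → Supernode V) (N : Finset ℕ)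
    (C : Set V) (t u : ℕ) : Supernode V :=
  (A u).grow (absorbed G w β A N C t u)

/-- The part of the arena that is not absorbed when supernode `t` retires. -/
def leftover (G : SimpleGraph V) (w : Sym2 V → ℕ) (β : ℕ) (A : ℕ → Supernode V) (N : Finset ℕ)
    (C : Set V) (t : ℕ) : Set V :=
  C \ ⋃ u, absorbed G w β A N C t u

lemma carrier_subset_carrier_grown : (A u).carrier ⊆ (grown G w β A N C t u).carrier :=
  Set.subset_union_left

lemma carrier_grown_of_not (h : ¬(u ∈ N ∧ t < u)) :
    (grown G w β A N C t u).carrier = (A u).carrier :=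
  Set.union_eq_left.mpr fun _ hv ↦ absurd (mem_of_mem_voronoiCell hv) h

lemma exists_mem_absorbed_of_notMem_leftover {x : V} (hxC : x ∈ C)
    (hx : x ∉ leftover G w β A N C t) :
    ∃ u ∈ N, t < u ∧ x ∈ absorbed G w β A N C t u := by
  have hxD : x ∈ ⋃ u, absorbed G w β A N C t u := by_contra fun hxD ↦ hx ⟨hxC, hxD⟩
  obtain ⟨u, hxu⟩ := Set.mem_iUnion.mp hxD
  obtain ⟨huN, htu⟩ := mem_of_mem_voronoiCell hxu
  exact ⟨u, huN, htu, hxu⟩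

namespace IsPartialDecomposition

lemma radius_grown (h : IsPartialDecomposition G w β k m A N C) (ht : t ∈ N) (hum : u < m) :
    ∃ ρ, ρ + ((N.erase t).filter (· < u)).card ≤ k ∧
      (grown G w β A N C t u).carrier ⊆ (grown G w β A N C t u).thickening G w (ρ * β) := by
  obtain ⟨ρ, hρ, hsubset⟩ := h.radius u hum
  by_cases hu : u ∈ N ∧ t < u
  · have htu : t ∈ N.filter (· < u) := Finset.mem_filter.mpr ⟨ht, hu.2⟩
    refine ⟨ρ + 1, ?_, ?_⟩
    · rw [Finset.filter_erase, Finset.card_erase_of_mem htu]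
      have := Finset.card_pos.mpr ⟨t, htu⟩
      omega
    · rw [add_mul, one_mul]
      exact Supernode.carrier_grow_subset_thickening hsubset
        (voronoiCell_subset.trans (h.arena_subset u hum))
        fun v hv ↦ exists_reachIn_of_mem_voronoiCell hv
  · have hcard := Finset.card_le_card (Finset.filter_subset_filter (· < u) (N.erase_subset t))
    exact ⟨ρ, by omega, (carrier_grown_of_not hu).trans_subset hsubset⟩

lemma disjoint_grown (h : IsPartialDecomposition G w β k m A N C) (hum : u < m) (hvm : v < m)
    (huv : u ≠ v) :
    Disjoint (grown G w β A N C t u).carrier (grown G w β A N C t v).carrier := by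
  refine Set.disjoint_union_left.mpr ⟨Set.disjoint_union_right.mpr ⟨h.disjoint u hum v hvm huv, ?_⟩,
    Set.disjoint_union_right.mpr ⟨?_, disjoint_voronoiCell huv⟩⟩
  · exact (h.disjoint_arena u hum).symm.mono_right voronoiCell_subset
  · exact (h.disjoint_arena v hvm).mono_left voronoiCell_subset

lemma boundary_leftover (h : IsPartialDecomposition G w β k m A N C)
    (hCt : ¬Touch G C (A t).carrier) {x z : V} (hx : x ∈ leftover G w β A N C t)
    (hz : z ∉ leftover G w β A N C t) (hxz : G.Adj x z) :
    ∃ u ∈ N.erase t, z ∈ (grown G w β A N C t u).carrier := by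
  by_cases hzC : z ∈ C
  · obtain ⟨u, huN, htu, hzu⟩ := exists_mem_absorbed_of_notMem_leftover hzC hz
    exact ⟨u, Finset.mem_erase.mpr ⟨htu.ne', huN⟩, .inr hzu⟩
  · obtain ⟨u, huN, hzu⟩ := h.boundary x hx.1 z hzC hxz
    have hut : u ≠ t := by
      rintro rfl
      exact hCt ⟨x, hx.1, z, hzu, hxz⟩
    exact ⟨u, Finset.mem_erase.mpr ⟨hut, huN⟩, .inl hzu⟩

-- A walk from the arena to supernode `t` leaves the arena through an active supernode, so if it
-- avoids the supernodes up to `t` and is short, then it starts in an absorbed vertex.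
lemma le_of_approaches_grown (h : IsPartialDecomposition G w β k m A N C)
    (hCt : ¬Touch G C (A t).carrier) {x : V} {d : ℕ} (hx : x ∈ leftover G w β A N C t)
    (hxt : Approaches G w (grown G w β A N C t) x t d) : β ≤ d := by
  obtain ⟨y, hxy, a, ha, hya⟩ := hxt
  rw [carrier_grown_of_not fun ht ↦ t.lt_irrefl ht.2] at ha
  have hyC : y ∈ Cᶜ := fun hyC ↦ hCt ⟨y, hyC, a, ha, hya⟩
  obtain ⟨b, z, hzC, hbz, d₁, d₂, hxb, hzy, hd⟩ := hxy.exists_first_hit (not_not.mpr hx.1) hyC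
  have hbC : b ∈ C := not_not.mp hxb.right_mem.2
  obtain ⟨u, huN, hzu⟩ := h.boundary b hbC z hzC hbz
  have htu : t < u := not_le.mp fun hut ↦ hzy.left_mem u hut (.inl hzu)
  have hhits : Hits G w C (A u).carrier x (d₁ + w s(b, z)) :=
    ⟨z, hzu, (hxb.mono (fun v hv ↦ .inl (not_not.mp hv.2)) le_rfl).trans
      (.of_adj (.inl hbC) (.inr hzu) hbz)⟩
  by_contra hdβ
  obtain ⟨u', hu'⟩ := Hits.exists_mem_voronoiCell (B := fun u ↦ (A u).carrier)
    (M := {u | u ∈ N ∧ t < u}) (β := β) hhits ⟨huN, htu⟩ hx.1 (by omega)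
  exact hx.2 (Set.mem_iUnion.mpr ⟨u', hu'⟩)

lemma isRetired_grown (h : IsPartialDecomposition G w β k m A N C)
    (hCt : ¬Touch G C (A t).carrier) {K : Set V} (hK : K ⊆ leftover G w β A N C t) :
    IsRetired G w β (grown G w β A N C t) K t m := by
  refine ⟨_, hK, fun x hx z hz hxz ↦ ?_, fun y hy d ↦ h.le_of_approaches_grown hCt hy⟩
  obtain ⟨u, hu, hzu⟩ := h.boundary_leftover hCt hx hz hxz
  exact ⟨u, h.lt_of_mem u (Finset.mem_of_mem_erase hu), Finset.ne_of_mem_erase hu, hzu⟩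

theorem retire (h : IsPartialDecomposition G w β k m A N C) (ht : t ∈ N)
    (hCt : ¬Touch G C (A t).carrier) (ho : o ∈ leftover G w β A N C t) :
    IsPartialDecomposition G w β k m (grown G w β A N C t) (N.erase t)
      (component G (leftover G w β A N C t) o) := by
  have hsubset : component G (leftover G w β A N C t) o ⊆ leftover G w β A N C t :=
    component_subset
  have hsubset_arena := hsubset.trans Set.sdiff_subset
  have hretired {s m' : ℕ} (hs : s ∉ N) (hsm' : s < m') (hR : IsRetired G w β A C s m') :
      IsRetired G w β (grown G w β A N C t) (component G (leftover G w β A N C t) o) s m' :=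
    hR.mono hsm' le_rfl hsubset_arena (fun u _ ↦ carrier_subset_carrier_grown)
      (carrier_grown_of_not fun hsN ↦ hs hsN.1)
  refine ⟨connected_induce_component ho, fun u hu ↦ h.lt_of_mem u (Finset.mem_of_mem_erase hu),
    fun u hu ↦ hsubset_arena.trans (h.arena_subset u hu), fun u hu ↦ ?_,
    fun u hu ↦ (h.skeleton_subset u hu).trans carrier_subset_carrier_grown, fun u hu ↦ ?_,
    fun u hu ↦ h.radius_grown ht hu, fun u hu v hv huv ↦ h.disjoint_grown hu hv huv,
    fun u hu v hv huv ↦ ?_, fun x hx z hz hxz ↦ ?_, fun s hs hsN ↦ ?_, fun m' hm' ↦ ?_⟩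
  · exact Set.disjoint_union_right.mpr ⟨(h.disjoint_arena u hu).mono_left hsubset_arena,
      Set.disjoint_left.mpr fun x hx hxu ↦ (hsubset hx).2 (Set.mem_iUnion.mpr ⟨u, hxu⟩)⟩
  · exact Supernode.connected_carrier_grow (h.connected u hu)
      fun v hv ↦ exists_reachIn_of_mem_voronoiCell hv
  · exact (h.touch u (Finset.mem_of_mem_erase hu) v (Finset.mem_of_mem_erase hv) huv).mono
      carrier_subset_carrier_grown carrier_subset_carrier_grown
  · exact h.boundary_leftover hCt (hsubset hx) (fun hz' ↦ hz (mem_component_of_adj hx hz' hxz)) hxz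
  · by_cases hst : s = t
    · exact hst ▸ h.isRetired_grown hCt hsubset
    · have hsN' : s ∉ N := fun hs' ↦ hsN (Finset.mem_erase.mpr ⟨hst, hs'⟩)
      exact hretired hsN' hs (h.retired s hs hsN')
  · obtain ⟨M, hM, hMretired⟩ := h.history m' hm'
    refine ⟨M, hM, fun s hs hsM ↦ ?_⟩
    obtain ⟨hsN, hR⟩ := hMretired s hs hsM
    exact ⟨fun hs' ↦ hsN (Finset.mem_of_mem_erase hs'), hretired hsN hs hR⟩

end IsPartialDecomposition

end Retire

section Extend

/-- The supernodes after the creation of supernode `m` with skeleton `T` in the arena `C`. -/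
def extended (A : ℕ → Supernode V) (m : ℕ) (C T : Set V) : ℕ → Supernode V :=
  Function.update A m ⟨C, T, T⟩

lemma extended_self : extended A m C T m = ⟨C, T, T⟩ := Function.update_self ..

lemma extended_of_lt (h : t < m) : extended A m C T t = A t := Function.update_of_ne h.ne ..

namespace IsPartialDecomposition

lemma radius_extended (h : IsPartialDecomposition G w β k m A N C) (hN : N.card ≤ k)
    (hT : T ⊆ C) {u : ℕ} (hu : u < m + 1) :
    ∃ ρ, ρ + ((insert m N).filter (· < u)).card ≤ k ∧
      (extended A m C T u).carrier ⊆ (extended A m C T u).thickening G w (ρ * β) := by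
  have hfilter : (insert m N).filter (· < u) = N.filter (· < u) := by
    rw [Finset.filter_insert, if_neg (by omega)]
  rw [hfilter]
  rcases Nat.lt_succ_iff_lt_or_eq.mp hu with hum | rfl
  · rw [extended_of_lt hum]
    exact h.radius u hum
  · refine ⟨0, by rw [zero_add]; exact (Finset.card_filter_le _ _).trans hN, fun x hx ↦ ?_⟩
    rw [extended_self] at hx ⊢
    exact ⟨x, hx, (ReachIn.refl (hT hx)).mono subset_rfl (Nat.zero_le _)⟩

lemma disjoint_extended (h : IsPartialDecomposition G w β k m A N C) (hT : T ⊆ C) {u v : ℕ}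
    (hu : u < m + 1) (hv : v < m + 1) (huv : u ≠ v) :
    Disjoint (extended A m C T u).carrier (extended A m C T v).carrier := by
  rcases Nat.lt_succ_iff_lt_or_eq.mp hu with hum | rfl <;>
    rcases Nat.lt_succ_iff_lt_or_eq.mp hv with hvm | rfl
  · rw [extended_of_lt hum, extended_of_lt hvm]
    exact h.disjoint u hum v hvm huv
  · rw [extended_of_lt hum, extended_self]
    exact ((h.disjoint_arena u hum).mono_left hT).symm
  · rw [extended_self, extended_of_lt hvm]
    exact (h.disjoint_arena v hvm).mono_left hT
  · exact absurd rfl huv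

lemma touch_extended (h : IsPartialDecomposition G w β k m A N C)
    (htouch : ∀ t ∈ N, Touch G T (A t).carrier) {u v : ℕ} (hu : u ∈ insert m N)
    (hv : v ∈ insert m N) (huv : u ≠ v) :
    Touch G (extended A m C T u).carrier (extended A m C T v).carrier := by
  rcases Finset.mem_insert.mp hu with rfl | huN <;> rcases Finset.mem_insert.mp hv with rfl | hvN
  · exact absurd rfl huv
  · rw [extended_self, extended_of_lt (h.lt_of_mem v hvN)]
    exact htouch v hvN
  · rw [extended_self, extended_of_lt (h.lt_of_mem u huN)]
    exact (htouch u huN).symm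
  · rw [extended_of_lt (h.lt_of_mem u huN), extended_of_lt (h.lt_of_mem v hvN)]
    exact h.touch u huN v hvN huv

lemma boundary_extended (h : IsPartialDecomposition G w β k m A N C) {x z : V}
    (hx : x ∈ component G (C \ T) o) (hz : z ∉ component G (C \ T) o) (hxz : G.Adj x z) :
    ∃ u ∈ insert m N, z ∈ (extended A m C T u).carrier := by
  have hzCT : z ∉ C \ T := fun hz' ↦ hz (mem_component_of_adj hx hz' hxz)
  by_cases hzC : z ∈ C
  · refine ⟨m, Finset.mem_insert_self m N, ?_⟩
    rw [extended_self]
    exact by_contra fun hzT ↦ hzCT ⟨hzC, hzT⟩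
  · obtain ⟨u, huN, hzu⟩ := h.boundary x (component_subset hx).1 z hzC hxz
    refine ⟨u, Finset.mem_insert_of_mem huN, ?_⟩
    rwa [extended_of_lt (h.lt_of_mem u huN)]

theorem extend (h : IsPartialDecomposition G w β k m A N C) (hN : N.card ≤ k)
    (htouch : ∀ t ∈ N, Touch G T (A t).carrier) (hTC : T ⊆ C) (hT : (G.induce T).Connected)
    (ho : o ∈ C \ T) :
    IsPartialDecomposition G w β k (m + 1) (extended A m C T) (insert m N)
      (component G (C \ T) o) := by
  have hsubset : component G (C \ T) o ⊆ C \ T := component_subset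
  have hretired {s m' m'' : ℕ} (hsm' : s < m') (hm'm : m' ≤ m) (hm'm'' : m' ≤ m'')
      (hR : IsRetired G w β A C s m') :
      IsRetired G w β (extended A m C T) (component G (C \ T) o) s m'' :=
    hR.mono hsm' hm'm'' (hsubset.trans Set.sdiff_subset)
      (fun u hu ↦ by rw [extended_of_lt (hu.trans_le hm'm)])
      (by rw [extended_of_lt (hsm'.trans_le hm'm)])
  refine ⟨connected_induce_component ho, fun u hu ↦ ?_, fun u hu ↦ ?_, fun u hu ↦ ?_,
    fun u hu ↦ ?_, fun u hu ↦ ?_, fun u hu ↦ h.radius_extended hN hTC hu,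
    fun u hu v hv ↦ h.disjoint_extended hTC hu hv, fun u hu v hv ↦ h.touch_extended htouch hu hv,
    fun x hx z ↦ h.boundary_extended hx,
    fun s hs hsN ↦ ?_, fun m' hm' ↦ ?_⟩
  · rcases Finset.mem_insert.mp hu with rfl | huN
    exacts [u.lt_succ_self, (h.lt_of_mem u huN).trans m.lt_succ_self]
  · rcases Nat.lt_succ_iff_lt_or_eq.mp hu with hum | rfl
    · exact extended_of_lt hum ▸ (hsubset.trans Set.sdiff_subset).trans (h.arena_subset u hum)
    · exact extended_self ▸ hsubset.trans Set.sdiff_subset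
  · rcases Nat.lt_succ_iff_lt_or_eq.mp hu with hum | rfl
    · rw [extended_of_lt hum]
      exact (h.disjoint_arena u hum).mono_left (hsubset.trans Set.sdiff_subset)
    · rw [extended_self]
      exact Set.disjoint_left.mpr fun x hx ↦ (hsubset hx).2
  · rcases Nat.lt_succ_iff_lt_or_eq.mp hu with hum | rfl
    exacts [extended_of_lt hum ▸ h.skeleton_subset u hum, extended_self ▸ subset_rfl]
  · rcases Nat.lt_succ_iff_lt_or_eq.mp hu with hum | rfl
    exacts [extended_of_lt hum ▸ h.connected u hum, extended_self ▸ hT]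
  · obtain ⟨hsm, hsN⟩ := not_or.mp (Finset.mem_insert.not.mp hsN)
    have hs : s < m := by omega
    exact hretired hs le_rfl m.le_succ (h.retired s hs hsN)
  · rcases Nat.lt_succ_iff_lt_or_eq.mp hm' with hm'm | rfl
    · obtain ⟨M, hM, hMretired⟩ := h.history m' hm'm
      refine ⟨M, hM, fun s hs hsM ↦ ?_⟩
      obtain ⟨hsN, hR⟩ := hMretired s hs hsM
      have hsm : s ≠ m := by omega
      exact ⟨by simp [hsm, hsN], hretired hs hm'm.le le_rfl hR⟩
    · refine ⟨N, hN, fun s hs hsN ↦ ⟨by simp [hs.ne, hsN], ?_⟩⟩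
      exact hretired hs le_rfl le_rfl (h.retired s hs hsN)

end IsPartialDecomposition

end Extend

end PartialDecomposition

section Bounds

variable {G : SimpleGraph V} {w : Sym2 V → ℕ} {β k m n : ℕ} {A : ℕ → Supernode V}
  {N : Finset ℕ} {C : Set V} {x : V}

namespace IsPartialDecomposition

-- The arena and the active supernodes are the branch sets of a complete minor.
lemma card_le_of_not_hasCompleteMinor (h : IsPartialDecomposition G w β k m A N C)
    (hminor : ¬HasCompleteMinor G (k + 2)) (htouch : ∀ t ∈ N, Touch G C (A t).carrier) :
    N.card ≤ k := by
  have hcard : Fintype.card (Option N) = N.card + 1 := by simp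
  by_contra! hk
  refine hminor (.mono (h' := N.card + 1) ?_ (by omega))
  rw [← hcard]
  refine hasCompleteMinor_card (fun i : Option N ↦ i.elim C fun t ↦ (A t).carrier) ?_ ?_ ?_
  · rintro (_ | t)
    exacts [h.arena_connected, h.connected t (h.lt_of_mem t t.2)]
  · rintro (_ | t) (_ | u) htu
    · exact absurd rfl htu
    · exact h.disjoint_arena u (h.lt_of_mem u u.2)
    · exact (h.disjoint_arena t (h.lt_of_mem t t.2)).symm
    · exact h.disjoint t (h.lt_of_mem t t.2) u (h.lt_of_mem u u.2)
        fun h ↦ htu (by simp [Subtype.ext h])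
  · rintro (_ | t) (_ | u) htu
    · exact absurd rfl htu
    · exact htouch u u.2
    · exact (htouch t t.2).symm
    · exact h.touch t t.2 u u.2 fun h ↦ htu (by simp [Subtype.ext h])

lemma exists_card_le_forall_isRetired (h : IsPartialDecomposition G w β k m A N C)
    (hN : N.card ≤ k) {m' : ℕ} (hm' : m' ≤ m) :
    ∃ M : Finset ℕ, M.card ≤ k ∧ ∀ t < m', t ∉ M → IsRetired G w β A C t m' := by
  obtain hm'm | rfl := hm'.lt_or_eq
  · obtain ⟨M, hM, hMretired⟩ := h.history m' hm'm
    exact ⟨M, hM, fun t ht htM ↦ (hMretired t ht htM).2⟩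
  · exact ⟨N, hN, h.retired⟩

-- Index the supernodes by their distance to `x`, in units of `β`. In every prefix the suffix minima
-- are supernodes that were still active, since a retired one lies strictly further from `x` than
-- some later supernode.
theorem succ_le_choose (h : IsPartialDecomposition G w β k m A N C) (hβ : 1 ≤ β)
    (hN : N.card ≤ k) (hx : x ∈ C) (hnear : ∀ t < m, ∃ d < n * β, Approaches G w A x t d) :
    m + 1 ≤ (n + k).choose k := by
  let E t := sInf {d | Approaches G w A x t d}
  have hE (t : ℕ) (ht : t < m) : Approaches G w A x t (E t) ∧ E t < n * β := by
    obtain ⟨d, hd, hxt⟩ := hnear t ht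
    exact ⟨Nat.sInf_mem (s := {d | Approaches G w A x t d}) ⟨d, hxt⟩,
      (Nat.sInf_le hxt).trans_lt hd⟩
  have hnotMin {t m' : ℕ} (htm' : t < m') (hm' : m' ≤ m) (hR : IsRetired G w β A C t m') :
      t ∉ suffixMinima (fun t ↦ E t / β) 0 m' := fun ht ↦ by
    obtain ⟨u, htu, hum', d, hxu, hd⟩ := hR.exists_approaches hβ hx
      (fun u hu ↦ (h.disjoint_arena u (hu.trans_le hm')).notMem_of_mem_left hx)
      (hE t (htm'.trans_le hm')).1
    have hEβ : E u + β ≤ E t := (Nat.add_le_add_right (Nat.sInf_le hxu) β).trans hd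
    have hdiv := Nat.div_le_div_right (c := β) hEβ
    rw [Nat.add_div_right _ hβ] at hdiv
    exact absurd ((mem_suffixMinima.mp ht).2 u htu hum') (by simpa using hdiv)
  refine length_succ_le_choose_of_card_suffixMinima_le (e := fun t ↦ E t / β) (b := 0) m.zero_le
    (fun t _ ht ↦ ⟨Nat.zero_le _, ?_⟩) fun m' _ hm' ↦ ?_
  · rw [zero_add]
    exact Nat.div_lt_of_lt_mul (by rw [mul_comm]; exact (hE t ht).2)
  · obtain ⟨M, hM, hMretired⟩ := h.exists_card_le_forall_isRetired hN hm'
    refine (Finset.card_le_card fun t ht ↦ ?_).trans hM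
    have htm' := (mem_suffixMinima.mp ht).1.2
    exact by_contra fun htM ↦ hnotMin htm' hm' (hMretired t htm' htM) ht

end IsPartialDecomposition

end Bounds

section Ladders

variable {V ι : Type*} [LinearOrder ι] {G : SimpleGraph V} {w : Sym2 V → ℕ} {β δ k m t R : ℕ}
  {A : ℕ → Supernode V} {N : Finset ℕ} {C S S' : Set V} {I : Finset ι} {x p : ι → V} {i : ι}

/-- The links of a ladder: for `j < i` in `I`, the point `x i` is within distance `R` of `p j`
inside `S`. -/
def Linked (G : SimpleGraph V) (w : Sym2 V → ℕ) (S : Set V) (R : ℕ) (x p : ι → V)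
    (I : Finset ι) : Prop :=
  ∀ i ∈ I, ∀ j ∈ I, j < i → ReachIn G w S R (p j) (x i)

lemma Linked.mono (h : Linked G w S R x p I) (hS : S ⊆ S') : Linked G w S' R x p I :=
  fun i hi j hj hji ↦ (h i hi j hj hji).mono hS le_rfl

lemma Linked.exists_inter_component (h : Linked G w S R x p I) (hI : 2 ≤ I.card) (hS : S ⊆ S') :
    ∃ o ∈ S', Linked G w (S ∩ component G S' o) R x p I := by
  have hIne : I.Nonempty := Finset.card_pos.mp (by omega)
  have hmin := I.min'_mem hIne
  have hmin_lt : I.min' hIne < I.max' hIne := I.min'_lt_max'_of_card (by omega)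
  have ho : p (I.min' hIne) ∈ S' := hS (h _ (I.max'_mem hIne) _ hmin hmin_lt).left_mem
  have hself := mem_component_self (G := G) ho
  have hx {i : ι} (hi : i ∈ I) (hlt : I.min' hIne < i) : x i ∈ component G S' (p (I.min' hIne)) :=
    ((h i hi _ hmin hlt).inter_component hS hself).right_mem.2
  refine ⟨_, ho, fun i hi j hj hji ↦ (h i hi j hj hji).inter_component hS ?_⟩
  have hxi := hx hi ((I.min'_le j hj).trans_lt hji)
  exact ((h i hi j hj hji).symm.inter_component hS hxi).right_mem.2

/-- The vertices of `S` at distance more than `δ` from the skeletons of the first `m` supernodes. -/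
def farRegion (G : SimpleGraph V) (w : Sym2 V → ℕ) (δ m : ℕ) (A : ℕ → Supernode V) (S : Set V) :
    Set V :=
  {z ∈ S | ∀ t < m, z ∉ (A t).thickening G w δ}

/-- The sub-ladder indexed by `I` has survived the first `m` rounds: its links stay in the part of
the arena far from all supernodes, and each of its points `x i` is near the skeleton of each
supernode, by a path staying far from the earlier supernodes. -/
structure Survives (G : SimpleGraph V) (w : Sym2 V → ℕ) (δ R m : ℕ) (A : ℕ → Supernode V)
    (C : Set V) (x p : ι → V) (I : Finset ι) : Prop where
  linked : Linked G w (farRegion G w δ m A C) R x p I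
  near : ∀ t < m, ∀ i ∈ I,
    ∃ s ∈ (A t).skeleton, ReachIn G w (farRegion G w δ t A (A t).domain) R s (x i)

lemma farRegion_subset : farRegion G w δ m A S ⊆ S := fun _ hz ↦ hz.1

lemma farRegion_inter_subset : farRegion G w δ m A S ∩ S' ⊆ farRegion G w δ m A S' :=
  fun _ hz ↦ ⟨hz.2, hz.1.2⟩

lemma farRegion_subset_leftover (h : IsPartialDecomposition G w β k m A N C) (hkδ : k * β ≤ δ)
    (ht : t ∈ N) : farRegion G w δ m A C ⊆ leftover G w β A N C t := by
  refine fun z hz ↦ ⟨hz.1, fun hzD ↦ ?_⟩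
  obtain ⟨u, hzu⟩ := Set.mem_iUnion.mp hzD
  have hum : u < m := h.lt_of_mem u (mem_of_mem_voronoiCell hzu).1
  obtain ⟨ρ, hρ, hsubset⟩ := h.radius_grown ht hum
  have hρδ : ρ * β ≤ δ := (Nat.mul_le_mul_right β (by omega)).trans hkδ
  exact hz.2 u hum (Supernode.thickening_mono hρδ (hsubset (.inr hzu)))

theorem Survives.exists_forall_touch (hL : Survives G w δ R m A C x p I)
    (h : IsPartialDecomposition G w β k m A N C) (hkδ : k * β ≤ δ) (hI : 2 ≤ I.card) :
    ∃ A' N' C', IsPartialDecomposition G w β k m A' N' C' ∧ Survives G w δ R m A' C' x p I ∧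
      ∀ t ∈ N', Touch G C' (A' t).carrier := by
  induction hn : N.card generalizing A N C with
  | zero => exact ⟨A, N, C, h, hL, by simp [Finset.card_eq_zero.mp hn]⟩
  | succ n ih =>
    by_cases htouch : ∀ t ∈ N, Touch G C (A t).carrier
    · exact ⟨A, N, C, h, hL, htouch⟩
    push Not at htouch
    obtain ⟨t, ht, hCt⟩ := htouch
    obtain ⟨o, ho, hlinked⟩ :=
      hL.linked.exists_inter_component hI (farRegion_subset_leftover h hkδ ht)
    refine ih (A := grown G w β A N C t) ⟨?_, hL.near⟩ (h.retire ht hCt ho)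
      (by rw [Finset.card_erase_of_mem ht, hn, Nat.add_sub_cancel])
    exact hlinked.mono farRegion_inter_subset

lemma Survives.approaches (hL : Survives G w δ R m A C x p I)
    (h : IsPartialDecomposition G w β k m A N C) (hkδ : k * β ≤ δ) (ht : t < m) (hi : i ∈ I)
    (hxC : x i ∈ C) : Approaches G w A (x i) t R := by
  obtain ⟨s, hs, hsx⟩ := hL.near t ht i hi
  obtain ⟨y, a, ha, hya, d, _, hxy, -, hd⟩ := hsx.symm.exists_first_hit
    ((h.disjoint_arena t ht).notMem_of_mem_left hxC) (h.skeleton_subset t ht hs)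
  refine ⟨y, hxy.mono (fun z hz u hut hzu ↦ ?_) (by omega), a, ha, hya⟩
  obtain hut | rfl := hut.lt_or_eq
  · refine hz.1.2 u hut (Supernode.thickening_mono hkδ ?_)
    exact h.carrier_subset_thickening (hut.trans ht) hzu
  · exact hz.2 hzu

end Ladders

section Skeletons

variable {V : Type*} {G : SimpleGraph V} {w : Sym2 V → ℕ} {δ d d' : ℕ} {C T : Set V}
  {o q v x x' y z : V} {Y : Finset V} {net : V → ℕ → V}

lemma exists_reachIn_of_mem_support_of_mem_support (w : Sym2 V → ℕ) (p : G.Walk o y)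
    (hp : ∀ z ∈ p.support, z ∈ C) (hv : v ∈ p.support) (hz : z ∈ p.support) :
    ∃ d₁ d₂ d₃, d₁ + d₂ + d₃ = cost w p ∧ ReachIn G w C d₂ v z ∧
      (ReachIn G w C d₁ o v ∧ ReachIn G w C d₃ z y ∨
        ReachIn G w C d₁ o z ∧ ReachIn G w C d₃ v y) := by
  classical
  have htake : ∀ z ∈ (p.takeUntil v hv).support, z ∈ C :=
    fun z hz ↦ hp z (p.support_takeUntil_subset_support hv hz)
  have hdrop : ∀ z ∈ (p.dropUntil v hv).support, z ∈ C :=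
    fun z hz ↦ hp z (p.support_dropUntil_subset_support hv hz)
  have hcost : cost w (p.takeUntil v hv) + cost w (p.dropUntil v hv) = cost w p := by
    rw [← cost_append, p.take_spec]
  rw [← p.take_spec hv, SimpleGraph.Walk.mem_support_append_iff] at hz
  rcases hz with hz | hz
  · obtain ⟨d₁, d₂, hoz, hzv, hd⟩ := exists_reachIn_of_mem_support w _ htake hz
    exact ⟨d₁, d₂, _, by rw [hd, hcost], hzv.symm, .inr ⟨hoz, ⟨_, le_rfl, hdrop⟩⟩⟩
  · obtain ⟨d₂, d₃, hvz, hzy, hd⟩ := exists_reachIn_of_mem_support w _ hdrop hz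
    exact ⟨_, d₂, d₃, by rw [add_assoc, hd, hcost], hvz, .inl ⟨⟨_, le_rfl, htake⟩, hzy⟩⟩

lemma exists_geodesic (w : Sym2 V → ℕ) (h : ∃ p : G.Walk o y, ∀ x ∈ p.support, x ∈ C) :
    ∃ p : G.Walk o y, (∀ x ∈ p.support, x ∈ C) ∧ ∀ D, ReachIn G w C D o y → cost w p ≤ D := by
  obtain ⟨p, hp, hmin⟩ := exists_minimalFor_of_wellFoundedLT
    (fun p : G.Walk o y ↦ ∀ x ∈ p.support, x ∈ C) (cost w) h
  refine ⟨p, hp, fun D ⟨q, hqD, hq⟩ ↦ ?_⟩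
  exact (le_total (cost w p) (cost w q)).elim (·.trans hqD) fun hqp ↦ (hmin hq hqp).trans hqD

-- Along a geodesic, two vertices at distance `e v` and `e z` from its start are at distance
-- `|e v - e z|`; hence one vertex out of each class of `⌊e v / δ⌋` suffices for the net.
lemma exists_geodesic_net (w : Sym2 V → ℕ) (hδ : 0 < δ)
    (h : ∃ p : G.Walk o y, ∀ x ∈ p.support, x ∈ C) :
    ∃ Q ⊆ C, o ∈ Q ∧ y ∈ Q ∧ (G.induce Q).Connected ∧
      ∃ net : ℕ → V, ∀ v ∈ Q, ∀ D, ReachIn G w C D o v →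
        ∃ s ≤ D / δ, ReachIn G w C δ (net s) v := by
  obtain ⟨p, hp, hmin⟩ := exists_geodesic w h
  let e v := sInf {D | ReachIn G w C D o v}
  have he {v : V} {D : ℕ} (hD : ReachIn G w C D o v) : ReachIn G w C (e v) o v ∧ e v ≤ D :=
    ⟨Nat.sInf_mem (s := {D | ReachIn G w C D o v}) ⟨D, hD⟩, Nat.sInf_le hD⟩
  have hclose {v z : V} (hv : v ∈ p.support) (hz : z ∈ p.support) (hvz : e v / δ = e z / δ) :
      ReachIn G w C δ v z := by
    have hmod := Nat.div_add_mod (e v) δ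
    have hmod' := Nat.div_add_mod (e z) δ
    have hlt := Nat.mod_lt (e v) hδ
    have hlt' := Nat.mod_lt (e z) hδ
    rw [hvz] at hmod
    obtain ⟨d₁, d₂, d₃, hd, hd₂, ⟨hov, hzy⟩ | ⟨hoz, hvy⟩⟩ :=
      exists_reachIn_of_mem_support_of_mem_support w p hp hv hz
    · have := hmin _ ((he (hov.trans hd₂)).1.trans hzy)
      have := (he hov).2
      exact hd₂.mono subset_rfl (by omega)
    · have := hmin _ ((he (hoz.trans hd₂.symm)).1.trans hvy)
      have := (he hoz).2
      exact hd₂.mono subset_rfl (by omega)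
  have hnet (s : ℕ) : ∃ z, ∀ v ∈ p.support, e v / δ = s → ReachIn G w C δ z v := by
    by_cases hs : ∃ z ∈ p.support, e z / δ = s
    · obtain ⟨z, hz, rfl⟩ := hs
      exact ⟨z, fun v hv hvz ↦ hclose hz hv hvz.symm⟩
    · exact ⟨o, fun v hv hvs ↦ absurd ⟨v, hv, hvs⟩ hs⟩
  choose net hnet using hnet
  exact ⟨{v | v ∈ p.support}, hp, p.start_mem_support, p.end_mem_support,
    p.connected_induce_support, net, fun v hv D hD ↦
      ⟨e v / δ, Nat.div_le_div_right (he hD).2, hnet _ v hv rfl⟩⟩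

/-- The points `net y s` form a net of `T`: each vertex of `T` at distance `D` from `o` inside `C`
is within distance `δ` of a point `net y s` with `y ∈ Y` and `s ≤ D / δ`. -/
def IsNet (G : SimpleGraph V) (w : Sym2 V → ℕ) (δ : ℕ) (C T : Set V) (o : V) (Y : Finset V)
    (net : V → ℕ → V) : Prop :=
  ∀ v ∈ T, ∀ D, ReachIn G w C D o v → ∃ y ∈ Y, ∃ s ≤ D / δ, ReachIn G w C δ (net y s) v

-- The skeleton is a union of geodesics from `o` to the points of `Y`.
lemma exists_skeleton (w : Sym2 V → ℕ) (hC : (G.induce C).Connected) (hYC : ↑Y ⊆ C) (ho : o ∈ Y)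
    (hδ : 0 < δ) :
    ∃ T net, ↑Y ⊆ T ∧ T ⊆ C ∧ (G.induce T).Connected ∧ IsNet G w δ C T o Y net := by
  have hgeodesic (y : V) (hy : y ∈ Y) := exists_geodesic_net w hδ
    (exists_walk_of_connected_induce hC (hYC ho) (hYC hy))
  choose! Q hQC hoQ hyQ hQ net hnet using hgeodesic
  have hQT {y : V} (hy : y ∈ Y) : Q y ⊆ ⋃ y ∈ Y, Q y := Set.subset_biUnion_of_mem hy
  refine ⟨⋃ y ∈ Y, Q y, net, fun y hy ↦ hQT hy (hyQ y hy), Set.iUnion₂_subset hQC, ?_, ?_⟩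
  · refine SimpleGraph.induce_connected_of_patches o (hQT ho (hoQ o ho)) fun {v} hv ↦ ?_
    obtain ⟨y, hy, hvy⟩ := Set.mem_iUnion₂.mp hv
    exact ⟨Q y, hQT hy, hoQ y hy, hvy, (hQ y hy).preconnected _ _⟩
  · intro v hv D hD
    obtain ⟨y, hy, hvy⟩ := Set.mem_iUnion₂.mp hv
    exact ⟨y, hy, hnet y hy v hvy D hD⟩

lemma exists_contact_set {B : ℕ → Set V} {N : Finset ℕ} (ho : o ∈ C)
    (htouch : ∀ t ∈ N, Touch G C (B t)) :
    ∃ Y : Finset V, o ∈ Y ∧ ↑Y ⊆ C ∧ Y.card ≤ N.card + 1 ∧ ∀ t ∈ N, Touch G Y (B t) := by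
  classical
  have : Nonempty V := ⟨o⟩
  choose! y hyC hy using htouch
  refine ⟨insert o (N.image y), Finset.mem_insert_self _ _, ?_,
    (Finset.card_insert_le _ _).trans (Nat.add_le_add_right Finset.card_image_le 1), fun t ht ↦ ?_⟩
  · simpa [Set.insert_subset_iff, ho, Set.subset_def] using hyC
  · exact ⟨y t, Finset.mem_insert_of_mem (Finset.mem_image_of_mem y ht), hy t ht⟩

open Classical in
/-- The distance profile of `x` with respect to a net: all triples `(y, s, r)` in a bounded range
such that `x` is within distance `r * δ` of `net y s`. -/
noncomputable def profile (G : SimpleGraph V) (w : Sym2 V → ℕ) (δ a : ℕ) (C : Set V)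
    (Y : Finset V) (net : V → ℕ → V) (x : V) : Finset (V × ℕ × ℕ) :=
  {f ∈ Y ×ˢ Finset.range (2 * a + 2) ×ˢ Finset.range (a + 4) |
    ReachIn G w C (f.2.2 * δ) (net f.1 f.2.1) x}

lemma mem_profile {a s r : ℕ} : (y, s, r) ∈ profile G w δ a C Y net x ↔
    (y ∈ Y ∧ s < 2 * a + 2 ∧ r < a + 4) ∧ ReachIn G w C (r * δ) (net y s) x := by
  simp only [profile, Finset.mem_filter, Finset.mem_product, Finset.mem_range]

-- If a walk from `q` to `x` passes near `T`, hence near a point of the net, then a point `x'` with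
-- the same profile can be reached from `q` through this point, at almost no extra cost.
lemma reachIn_of_profile_subset {a : ℕ} (hδ : 0 < δ) (hnet : IsNet G w δ C T o Y net)
    (hox : ReachIn G w C (a * δ) o x) (hv : v ∈ T) (hvz : ReachIn G w C δ v z)
    (hqz : ReachIn G w C d q z) (hzx : ReachIn G w C d' z x) (hd : d + d' ≤ a * δ)
    (hprofile : profile G w δ a C Y net x ⊆ profile G w δ a C Y net x') :
    ReachIn G w C (a * δ + 5 * δ) q x' := by
  have hov : ReachIn G w C ((2 * a + 1) * δ) o v :=
    ((hox.trans hzx.symm).trans hvz.symm).mono subset_rfl (by linarith)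
  obtain ⟨y, hy, s, hs, hsv⟩ := hnet v hv _ hov
  rw [Nat.mul_div_cancel _ hδ] at hs
  have hd' : d' / δ ≤ a := Nat.div_le_of_le_mul (by linarith)
  have hmod := Nat.div_add_mod d' δ
  have hlt := Nat.mod_lt d' hδ
  have hsx : ReachIn G w C ((d' / δ + 3) * δ) (net y s) x :=
    ((hsv.trans hvz).trans hzx).mono subset_rfl (by linarith)
  have hmem : (y, s, d' / δ + 3) ∈ profile G w δ a C Y net x :=
    mem_profile.mpr ⟨⟨hy, by omega, by omega⟩, hsx⟩
  have hsx' := (mem_profile.mp (hprofile hmem)).2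
  have := Nat.div_mul_le_self d' δ
  exact (((hqz.trans hvz.symm).trans hsv.symm).trans hsx').mono subset_rfl (by linarith)

/-- The number of possible distance profiles with respect to the net of a skeleton that consists of
`k + 1` geodesics. This is the factor by which a ladder may shrink in one round. -/
def shrinkFactor (a k : ℕ) : ℕ := 2 ^ ((k + 1) * ((2 * a + 2) * (a + 4)))

lemma shrinkFactor_pos (a k : ℕ) : 0 < shrinkFactor a k := Nat.two_pow_pos _

lemma exists_le_card_forall_profile_eq {ι : Type*} {a k n : ℕ} (x : ι → V) (I : Finset ι)
    (hY : Y.card ≤ k + 1) (hI : shrinkFactor a k * n ≤ I.card) :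
    ∃ J ⊆ I, n ≤ J.card ∧ ∀ i ∈ J, ∀ j ∈ J,
      profile G w δ a C Y net (x i) = profile G w δ a C Y net (x j) := by
  classical
  let F := (Y ×ˢ Finset.range (2 * a + 2) ×ˢ Finset.range (a + 4)).powerset
  have hF : F.card ≤ shrinkFactor a k := by
    simp only [F, Finset.card_powerset, Finset.card_product, Finset.card_range]
    exact Nat.pow_le_pow_right two_pos (Nat.mul_le_mul_right _ hY)
  obtain ⟨f, -, hf⟩ := Finset.exists_le_card_fiber_of_mul_le_card_of_maps_to (s := I) (t := F)
    (f := fun i ↦ profile G w δ a C Y net (x i))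
    (fun i _ ↦ Finset.mem_powerset.mpr (Finset.filter_subset _ _))
    ⟨∅, Finset.empty_mem_powerset _⟩ ((Nat.mul_le_mul_right n hF).trans hI)
  refine ⟨_, Finset.filter_subset _ _, hf, fun i hi j hj ↦ ?_⟩
  exact (Finset.mem_filter.mp hi).2.trans (Finset.mem_filter.mp hj).2.symm

end Skeletons

section Rounds

variable {ι : Type*} [LinearOrder ι] {G : SimpleGraph V} {w : Sym2 V → ℕ} {β δ a k m n R t : ℕ}
  {A : ℕ → Supernode V} {N : Finset ℕ} {C S T : Set V} {I J : Finset ι} {x p : ι → V} {i₀ : ι}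

lemma farRegion_extended (h : t ≤ m) :
    farRegion G w δ t (extended A m C T) S = farRegion G w δ t A S := by
  ext z
  refine and_congr_right fun _ ↦ forall₂_congr fun u hu ↦ ?_
  rw [extended_of_lt (hu.trans_le h)]

lemma farRegion_extended_succ : farRegion G w δ (m + 1) (extended A m C T) S =
    farRegion G w δ m A S \ Supernode.thickening ⟨C, T, T⟩ G w δ := by
  ext z
  refine ⟨fun hz ↦ ⟨?_, extended_self (A := A) ▸ hz.2 m m.lt_succ_self⟩, fun hz ↦ ⟨hz.1.1, ?_⟩⟩
  · rw [← farRegion_extended le_rfl]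
    exact ⟨hz.1, fun t ht ↦ hz.2 t (ht.trans m.lt_succ_self)⟩
  · intro t ht
    rcases Nat.lt_succ_iff_lt_or_eq.mp ht with htm | rfl
    exacts [extended_of_lt htm ▸ hz.1.2 t htm, extended_self (A := A) ▸ hz.2]

lemma Linked.diff_thickening {c : Supernode V} {o : V} {Y : Finset V} {net : V → ℕ → V}
    (h : Linked G w S (a * δ) x p J) (hδ : 0 < δ) (hS : S ⊆ c.domain)
    (hnet : IsNet G w δ c.domain c.skeleton o Y net)
    (ho : ∀ i ∈ J, ReachIn G w c.domain (a * δ) o (x i))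
    (hprofile : ∀ i ∈ J, ∀ j ∈ J,
      profile G w δ a c.domain Y net (x i) = profile G w δ a c.domain Y net (x j))
    (hfar : ∀ i, ¬ReachIn G w c.domain (a * δ + 5 * δ) (p i) (x i)) :
    Linked G w (S \ c.thickening G w δ) (a * δ) x p J := by
  intro i hi j hj hji
  obtain ⟨q, hqR, hqS⟩ := h i hi j hj hji
  refine ⟨q, hqR, fun z hz ↦ ⟨hqS z hz, fun ⟨v, hv, hvz⟩ ↦ hfar j ?_⟩⟩
  obtain ⟨d₁, d₂, hjz, hzi, hd⟩ := exists_reachIn_of_mem_support w q hqS hz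
  exact reachIn_of_profile_subset hδ hnet (ho i hi) hv hvz (hjz.mono hS le_rfl)
    (hzi.mono hS le_rfl) (hd.trans_le hqR) (hprofile i hi j hj).subset

lemma Survives.extended (hL : Survives G w δ R m A C x p I) (hJI : J ⊆ I) (hT : T ⊆ C)
    (hi₀ : i₀ ∈ I) (hlt : ∀ i ∈ J, i₀ < i) (hiT : p i₀ ∈ T) (hJ : 2 ≤ J.card)
    (hJlinked : Linked G w (farRegion G w δ m A C \ Supernode.thickening ⟨C, T, T⟩ G w δ) R x p J) :
    ∃ o ∈ C \ T, Survives G w δ R (m + 1) (extended A m C T) (component G (C \ T) o) x p J := by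
  have hsubset : farRegion G w δ m A C \ Supernode.thickening ⟨C, T, T⟩ G w δ ⊆ C \ T :=
    fun z hz ↦ ⟨hz.1.1, fun hzT ↦ hz.2
      ⟨z, hzT, (ReachIn.refl (hT hzT)).mono subset_rfl (Nat.zero_le _)⟩⟩
  obtain ⟨o, ho, hlinked⟩ := hJlinked.exists_inter_component hJ hsubset
  refine ⟨o, ho, ?_, fun t ht i hi ↦ ?_⟩
  · rw [← farRegion_extended_succ] at hlinked
    exact hlinked.mono farRegion_inter_subset
  · rw [farRegion_extended (Nat.le_of_lt_succ ht)]
    rcases Nat.lt_succ_iff_lt_or_eq.mp ht with htm | rfl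
    · rw [extended_of_lt htm]
      exact hL.near t htm i (hJI hi)
    · rw [extended_self]
      exact ⟨p i₀, hiT, hL.linked i (hJI hi) i₀ hi₀ (hlt i hi)⟩

theorem Survives.exists_succ (hL : Survives G w δ (a * δ) m A C x p I)
    (h : IsPartialDecomposition G w β k m A N C) (hδ : 0 < δ) (hN : N.card ≤ k)
    (htouch : ∀ t ∈ N, Touch G C (A t).carrier)
    (hfar : ∀ i, ¬ReachIn G w Set.univ (a * δ + 5 * δ) (p i) (x i)) (hn : 2 ≤ n)
    (hI : shrinkFactor a k * n < I.card) :
    ∃ J : Finset ι, n ≤ J.card ∧ ∃ A' N' C', IsPartialDecomposition G w β k (m + 1) A' N' C' ∧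
      Survives G w δ (a * δ) (m + 1) A' C' x p J := by
  have hIne : I.Nonempty := Finset.card_pos.mp (by omega)
  have hi₀ := I.min'_mem hIne
  set i₀ := I.min' hIne
  have hlt {i : ι} (hi : i ∈ I.erase i₀) : i₀ < i := I.min'_lt_of_mem_erase_min' hIne hi
  have hlink {i : ι} (hi : i ∈ I.erase i₀) : ReachIn G w C (a * δ) (p i₀) (x i) :=
    (hL.linked i (Finset.mem_of_mem_erase hi) i₀ hi₀ (hlt hi)).mono farRegion_subset le_rfl
  have hcard : shrinkFactor a k * n ≤ (I.erase i₀).card := by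
    rw [Finset.card_erase_of_mem hi₀]
    omega
  have hpos : 0 < shrinkFactor a k * n := Nat.mul_pos (shrinkFactor_pos a k) (by omega)
  obtain ⟨i, hi⟩ := Finset.card_pos.mp (hpos.trans_le hcard)
  obtain ⟨Y, hoY, hYC, hY, hYtouch⟩ := exists_contact_set (hlink hi).left_mem htouch
  obtain ⟨T, net, hYT, hTC, hT, hnet⟩ := exists_skeleton w h.arena_connected hYC hoY hδ
  obtain ⟨J, hJ, hnJ, hprofile⟩ :=
    exists_le_card_forall_profile_eq (G := G) (w := w) (δ := δ) (C := C) (net := net) x (I.erase i₀)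
      (hY.trans (Nat.succ_le_succ hN)) hcard
  have hJI := hJ.trans (I.erase_subset i₀)
  have hJlinked : Linked G w (farRegion G w δ m A C) (a * δ) x p J :=
    fun i hi j hj ↦ hL.linked i (hJI hi) j (hJI hj)
  obtain ⟨o, ho, hJ'⟩ := hL.extended hJI hTC hi₀ (fun i hi ↦ hlt (hJ hi)) (hYT hoY) (hn.trans hnJ)
    (hJlinked.diff_thickening (c := ⟨C, T, T⟩) hδ farRegion_subset hnet (fun i hi ↦ hlink (hJ hi))
      hprofile fun i hi ↦ hfar i (hi.mono (Set.subset_univ _) le_rfl))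
  exact ⟨J, hnJ, _, _, _,
    h.extend hN (fun t ht ↦ (hYtouch t ht).mono hYT subset_rfl) hTC hT ho, hJ'⟩

lemma Survives.exists_add (hminor : ¬HasCompleteMinor G (k + 2)) (hδ : 0 < δ) (hkδ : k * β ≤ δ)
    (hfar : ∀ i, ¬ReachIn G w Set.univ (a * δ + 5 * δ) (p i) (x i))
    (hL : Survives G w δ (a * δ) m A C x p I) (h : IsPartialDecomposition G w β k m A N C) (j : ℕ)
    (hI : 2 * (2 * shrinkFactor a k) ^ j ≤ I.card) :
    ∃ J : Finset ι, 2 ≤ J.card ∧ ∃ A' N' C', IsPartialDecomposition G w β k (m + j) A' N' C' ∧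
      Survives G w δ (a * δ) (m + j) A' C' x p J := by
  induction j generalizing m A N C I with
  | zero => exact ⟨I, by simpa using hI, A, N, C, h, hL⟩
  | succ j ih =>
    have hshrink := shrinkFactor_pos a k
    have hpow : 0 < (2 * shrinkFactor a k) ^ j := by positivity
    have hmul := Nat.mul_pos hshrink hpow
    have hI' : shrinkFactor a k * (2 * (2 * shrinkFactor a k) ^ j) < I.card := by
      rw [pow_succ] at hI
      linarith
    obtain ⟨A', N', C', h', hL', htouch⟩ := hL.exists_forall_touch h hkδ (by linarith)
    obtain ⟨J, hJ, A'', N'', C'', h'', hL''⟩ := hL'.exists_succ h' hδ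
      (h'.card_le_of_not_hasCompleteMinor hminor htouch) htouch hfar (by omega) hI'
    rw [← Nat.add_assoc, Nat.add_right_comm]
    exact ih hL'' h'' hJ

theorem length_lt_of_not_hasCompleteMinor {ℓ : ℕ} {x p : Fin ℓ → V}
    (hminor : ¬HasCompleteMinor G (k + 2)) (hβ : 1 ≤ β) (hδ : 0 < δ) (hkδ : k * β ≤ δ)
    (hn : a * δ ≤ n * β)
    (hlink : ∀ i j, j < i → ReachIn G w Set.univ (a * δ) (p j) (x i))
    (hfar : ∀ i, ¬ReachIn G w Set.univ (a * δ + 5 * δ) (p i) (x i)) :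
    ℓ < 2 * (2 * shrinkFactor a k) ^ (n + 1 + k).choose k := by
  by_contra! hℓ
  have hcard : (Finset.univ : Finset (Fin ℓ)).card = ℓ := by simp
  have hℓ2 : 2 ≤ ℓ := by
    have hshrink := shrinkFactor_pos a k
    have : 0 < (2 * shrinkFactor a k) ^ (n + 1 + k).choose k := by positivity
    omega
  have hlinked : Linked G w Set.univ (a * δ) x p Finset.univ := fun i _ j _ ↦ hlink i j
  obtain ⟨o, ho, hlinked⟩ := hlinked.exists_inter_component (by omega) subset_rfl
  obtain ⟨J, hJ, _, _, _, h, hL⟩ := Survives.exists_add (β := β)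
    (C := component G Set.univ o) (A := fun _ ↦ ⟨∅, ∅, ∅⟩) (N := ∅)
    (m := 0) hminor hδ hkδ hfar ⟨hlinked.mono fun z hz ↦ ⟨hz.2, by simp⟩, by simp⟩
    (.initial (connected_induce_component ho)
      (fun v hv z hvz ↦ mem_component_of_adj hv (Set.mem_univ z) hvz) _) _ (hℓ.trans_eq hcard.symm)
  obtain ⟨A, N, C, h, hL, htouch⟩ := hL.exists_forall_touch h hkδ hJ
  have hJne : J.Nonempty := Finset.card_pos.mp (by omega)
  have hmax := J.max'_mem hJne
  have hmin_lt : J.min' hJne < J.max' hJne := J.min'_lt_max'_of_card (by omega)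
  have hxC : x (J.max' hJne) ∈ C :=
    (hL.linked _ hmax _ (J.min'_mem hJne) hmin_lt).right_mem.1
  have hchoose := h.succ_le_choose (n := n + 1) hβ
    (h.card_le_of_not_hasCompleteMinor hminor htouch) hxC fun t ht ↦
    ⟨a * δ, by linarith, hL.approaches h hkδ ht hmax hxC⟩
  omega

end Rounds

section NatWeights

open Filter

variable {G : SimpleGraph V} {w : Sym2 V → ℝ≥0∞} {B κ r ε : ℝ} {u v : V}

/-- Integral weights approximating `κ` times the given ones: a weight is truncated at `B`, which
also makes it finite, then scaled by `κ` and rounded up. -/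
noncomputable def roundedWeight (w : Sym2 V → ℝ≥0∞) (B κ : ℝ) (e : Sym2 V) : ℕ :=
  ⌈κ * (min (w e) (.ofReal B)).toReal⌉₊

lemma mul_le_cost_roundedWeight (hκ : 0 ≤ κ) (q : G.Walk u v)
    (hB : .ofReal B ≤ walkWeight w q) : κ * B ≤ cost (roundedWeight w B κ) q := by
  have hmin {u v : V} (q : G.Walk u v) :
      κ * (min (cost w q) (.ofReal B)).toReal ≤ cost (roundedWeight w B κ) q := by
    induction q with
    | nil => simp [cost_nil]
    | @cons u b _ hub q ih =>
      have hadd : (min (w s(u, b) + cost w q) (.ofReal B)).toReal ≤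
          (min (w s(u, b)) (.ofReal B)).toReal + (min (cost w q) (.ofReal B)).toReal := by
        rw [← ENNReal.toReal_add (by simp) (by simp)]
        refine ENNReal.toReal_mono (by simp) ?_
        rcases le_total (w s(u, b)) (.ofReal B) with hub_le | hub_le
        · rcases le_total (cost w q) (.ofReal B) with hq_le | hq_le
          · rw [min_eq_left hub_le, min_eq_left hq_le]
            exact min_le_left _ _
          · exact (min_le_right _ _).trans ((min_eq_right hq_le).ge.trans le_add_self)
        · exact (min_le_right _ _).trans ((min_eq_right hub_le).ge.trans le_self_add)
      have hceil := Nat.le_ceil (κ * (min (w s(u, b)) (.ofReal B)).toReal)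
      rw [cost_cons, cost_cons, Nat.cast_add]
      calc _ ≤ _ := mul_le_mul_of_nonneg_left hadd hκ
        _ ≤ _ := by rw [mul_add]; exact add_le_add hceil ih
  have hBq : κ * (min (walkWeight w q) (.ofReal B)).toReal ≤ _ := hmin q
  rw [min_eq_right hB, ENNReal.toReal_ofReal'] at hBq
  exact (mul_le_mul_of_nonneg_left (le_max_left B 0) hκ).trans hBq

lemma cost_roundedWeight_le (hκ : 0 ≤ κ) (q : G.Walk u v) (hq : walkWeight w q ≠ ⊤) :
    ((cost (roundedWeight w B κ) q : ℕ) : ℝ) ≤ κ * (walkWeight w q).toReal + q.length := by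
  change cost w q ≠ ⊤ at hq
  change _ ≤ κ * (cost w q).toReal + q.length
  induction q with
  | nil => simp [cost_nil]
  | @cons u b _ hub q ih =>
    rw [cost_cons] at hq ⊢
    obtain ⟨hub_top, hq_top⟩ := ENNReal.add_ne_top.mp hq
    have hmin : (min (w s(u, b)) (.ofReal B)).toReal ≤ (w s(u, b)).toReal :=
      ENNReal.toReal_mono hub_top (min_le_left _ _)
    have hceil := Nat.ceil_lt_add_one
      (mul_nonneg hκ (ENNReal.toReal_nonneg (a := min (w s(u, b)) (.ofReal B))))
    have hround : (roundedWeight w B κ s(u, b) : ℝ) ≤ κ * (w s(u, b)).toReal + 1 :=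
      hceil.le.trans (add_le_add_left (mul_le_mul_of_nonneg_left hmin hκ) 1)
    rw [cost_cons, ENNReal.toReal_add hub_top hq_top, SimpleGraph.Walk.length_cons]
    push_cast
    linarith [ih hq_top]

lemma eventually_cost_roundedWeight_le (q : G.Walk u v) (hq : walkWeight w q < .ofReal r) :
    ∀ᶠ κ : ℝ in atTop, ((cost (roundedWeight w B κ) q : ℕ) : ℝ) ≤ κ * r := by
  have hgap : 0 < r - (walkWeight w q).toReal :=
    sub_pos.mpr ((ENNReal.lt_ofReal_iff_toReal_lt hq.ne_top).mp hq)
  filter_upwards [eventually_ge_atTop 0,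
    (tendsto_id.atTop_mul_const hgap).eventually_ge_atTop (q.length : ℝ)] with κ hκ hlength
  have := cost_roundedWeight_le (B := B) hκ q hq.ne_top
  rw [id, mul_sub] at hlength
  linarith

-- In units of `d = ε * r / 7`, links have length less than `a` and rungs length more than `a + 5`.
-- Both gaps leave room for rounding to a sufficiently fine integral scale.
theorem IsLadder.length_lt {k a ℓ : ℕ} {x p : Fin ℓ → V} (hL : IsLadder (gdist G w) ε r ℓ x p)
    (hminor : ¬HasCompleteMinor G (k + 2)) (hε : 0 < ε) (hr : 0 < r) (ha : 7 / ε < a)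
    (ha' : a ≤ 7 / ε + 1) :
    ℓ < 2 * (2 * shrinkFactor a k) ^ (a * (k + 1) + 1 + k).choose k := by
  set d := ε * r / 7 with hd
  have hd_pos : 0 < d := by positivity
  have hr_eq : 7 / ε * d = r := by rw [hd]; field_simp
  have hlink_lt : r < a * d := by nlinarith
  have hrung_lt : (a + 5) * d < (1 + ε) * r := by nlinarith
  have hlink (i j : Fin ℓ) (hji : j < i) : ∀ᶠ κ : ℝ in atTop, ∃ q : G.Walk (p j) (x i),
      ((cost (roundedWeight w ((1 + ε) * r) κ) q : ℕ) : ℝ) ≤ κ * (a * d) := by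
    have hdist : gdist G w (p j) (x i) < .ofReal (a * d) :=
      (hL.1 i j hji).trans_lt ((ENNReal.ofReal_lt_ofReal_iff (hr.trans hlink_lt)).mpr hlink_lt)
    obtain ⟨q, hq⟩ := iInf_lt_iff.mp hdist
    exact (eventually_cost_roundedWeight_le q hq).mono fun _ hκ ↦ ⟨q, hκ⟩
  have hscale : Tendsto (fun K : ℕ ↦ (K : ℝ) * ((k + 1) / d)) atTop atTop :=
    tendsto_natCast_atTop_atTop.atTop_mul_const (by positivity)
  obtain ⟨K, hK, hKlink⟩ := ((eventually_ge_atTop 1).and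
    (hscale.eventually (eventually_all.mpr fun i ↦ eventually_all.mpr fun j ↦
      eventually_all.mpr (hlink i j)))).exists
  set κ : ℝ := K * ((k + 1) / d) with hκ
  have hκ_pos : 0 < κ := by positivity
  have hκd : κ * d = ((k + 1) * K : ℕ) := by rw [hκ]; push_cast; field_simp
  refine length_lt_of_not_hasCompleteMinor (x := x) (p := p) (β := K)
    (w := roundedWeight w ((1 + ε) * r) κ) (δ := (k + 1) * K) hminor hK (by positivity)
    (Nat.mul_le_mul_right K k.le_succ) (mul_assoc ..).ge (fun i j hji ↦ ?_) fun i ⟨q, hq, _⟩ ↦ ?_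
  · obtain ⟨q, hq⟩ := hKlink i j hji
    refine ⟨q, ?_, fun _ _ ↦ Set.mem_univ _⟩
    rw [mul_left_comm, hκd] at hq
    exact_mod_cast hq
  · have hlower := mul_le_cost_roundedWeight hκ_pos.le q ((hL.2 i).le.trans (iInf_le _ q))
    have hlt : κ * ((a + 5) * d) < κ * ((1 + ε) * r) := mul_lt_mul_of_pos_left hrung_lt hκ_pos
    rw [mul_left_comm, hκd, add_mul] at hlt
    have hcontra := hlt.trans_le (hlower.trans (Nat.cast_le.mpr hq))
    push_cast at hcontra
    exact lt_irrefl _ hcontra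

end NatWeights

section Arithmetic

variable {k a : ℕ} {c ε : ℝ}

lemma choose_le_choose_of_le_div (hε : 0 < ε) (hε2 : ε < 2) (ha : a ≤ 7 / ε + 1) :
    (a * (k + 1) + 1 + k).choose k ≤ (k + 2 * ⌈36 * ((k : ℝ) + 2) / ε⌉₊).choose (k + 1) := by
  set X := 2 * ⌈36 * ((k : ℝ) + 2) / ε⌉₊ with hX
  have hinv : 1 / 2 < 1 / ε := one_div_lt_one_div_of_lt hε hε2
  have hX_ge : 72 * (1 / ε) * (k + 2) ≤ (X : ℝ) := by
    have hceil := Nat.le_ceil (36 * ((k : ℝ) + 2) / ε)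
    rw [hX, Nat.cast_mul, Nat.cast_ofNat]
    calc 72 * (1 / ε) * ((k : ℝ) + 2) = 2 * (36 * (k + 2) / ε) := by ring
      _ ≤ _ := by gcongr
  have ha_inv : (a : ℝ) ≤ 7 * (1 / ε) + 1 := ha.trans_eq (by ring)
  have hbase : a * (k + 1) + 1 ≤ X := by
    rify
    nlinarith
  have hhalf : k + 2 ≤ X := by
    rify
    nlinarith
  calc (a * (k + 1) + 1 + k).choose k ≤ (k + X).choose k := Nat.choose_le_choose k (by lia)
    _ ≤ (k + X).choose (k + 1) := Nat.choose_le_succ_of_lt_half_left (by lia)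

lemma exponent_le_sq {J B : ℕ} (hε : 0 < ε) (ha : a ≤ 7 / ε + 1) (hJB : J ≤ B) (hB : 1 ≤ B) :
    (1 + (1 + (k + 1) * ((2 * a + 2) * (a + 4))) * J : ℝ) ≤ (B * (12 + 72 / ε) * (k + 1)) ^ 2 := by
  have hinv : 0 < 1 / ε := by positivity
  have ha_inv : (a : ℝ) ≤ 7 * (1 / ε) + 1 := ha.trans_eq (by ring)
  have hquad : 2 + (2 * a + 2) * (a + 4) ≤ (12 + 72 / ε) ^ 2 := by
    calc (2 + (2 * a + 2) * (a + 4) : ℝ)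
        ≤ 2 + (2 * (7 * (1 / ε) + 1) + 2) * (7 * (1 / ε) + 1 + 4) := by gcongr
      _ ≤ (12 + 72 * (1 / ε)) ^ 2 := by nlinarith
      _ = _ := by ring
  have hBk : (1 : ℝ) ≤ B * (k + 1) := by
    exact_mod_cast one_le_mul_of_one_le_of_one_le hB k.succ_pos
  calc (1 + (1 + (k + 1) * ((2 * a + 2) * (a + 4))) * J : ℝ)
      ≤ B * (k + 1) + ((k + 1) + (k + 1) * ((2 * a + 2) * (a + 4))) * B := by
        gcongr
        exact le_add_of_nonneg_left k.cast_nonneg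
    _ = B * (k + 1) * (2 + (2 * a + 2) * (a + 4)) := by ring
    _ ≤ (B * (k + 1)) ^ 2 * (12 + 72 / ε) ^ 2 := by
        gcongr
        exact le_self_pow₀ hBk two_ne_zero
    _ = _ := by ring

lemma ladderBound_le_two_rpow (hε : 0 < ε) (hε2 : ε < 2) (ha : a ≤ 7 / ε + 1)
    (hc : c = (k + 2 * ⌈36 * ((k : ℝ) + 2) / ε⌉₊).choose (k + 1) * (12 + 72 / ε) * (k + 1)) :
    ((2 * (2 * shrinkFactor a k) ^ (a * (k + 1) + 1 + k).choose k : ℕ) : ℝ) ≤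
      2 ^ (c * (c + 1)) := by
  have hJB := choose_le_choose_of_le_div (k := k) hε hε2 ha
  set J := (a * (k + 1) + 1 + k).choose k
  have hc_nonneg : 0 ≤ c := by rw [hc]; positivity
  have hpow : 2 * (2 * shrinkFactor a k) ^ J =
      2 ^ (1 + (1 + (k + 1) * ((2 * a + 2) * (a + 4))) * J) := by
    rw [shrinkFactor, ← pow_succ', ← pow_mul, ← pow_succ', add_comm 1, add_comm 1]
  have hJ_pos : 1 ≤ J := Nat.choose_pos (by lia)
  have hexp := exponent_le_sq (k := k) hε ha hJB (hJ_pos.trans hJB)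
  rw [← hc] at hexp
  rw [hpow, Nat.cast_pow, Nat.cast_ofNat, ← Real.rpow_natCast]
  refine Real.rpow_le_rpow_of_exponent_le one_le_two ?_
  push_cast
  nlinarith

lemma two_rpow_le (hε : 0 < ε) (hc : 1 ≤ c) :
    (2 : ℝ) ^ (c * (c + 1)) ≤ (6 * c * (9 / ε + 2) ^ c) ^ (c + 1) := by
  rw [Real.rpow_mul zero_le_two]
  gcongr
  calc (2 : ℝ) ^ c ≤ (9 / ε + 2) ^ c := by
        gcongr
        exact le_add_of_nonneg_left (by positivity)
    _ ≤ 6 * c * (9 / ε + 2) ^ c := le_mul_of_one_le_left (by positivity) (by linarith)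

lemma one_le_choose_mul (k : ℕ) (hε : 0 < ε) :
    1 ≤ (k + 2 * ⌈36 * ((k : ℝ) + 2) / ε⌉₊).choose (k + 1) * (12 + 72 / ε) * ((k : ℝ) + 1) := by
  have hceil : 0 < ⌈36 * ((k : ℝ) + 2) / ε⌉₊ := Nat.ceil_pos.mpr (by positivity)
  have hchoose : 1 ≤ (k + 2 * ⌈36 * ((k : ℝ) + 2) / ε⌉₊).choose (k + 1) := Nat.choose_pos (by lia)
  have hfactor : 1 ≤ 12 + 72 / ε := by linarith [show 0 < 72 / ε by positivity]
  exact one_le_mul_of_one_le_of_one_le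
    (one_le_mul_of_one_le_of_one_le (by exact_mod_cast hchoose) hfactor)
    (le_add_of_nonneg_left k.cast_nonneg)

end Arithmetic

section ScatterDimension

variable {G : SimpleGraph V} {w : Sym2 V → ℝ≥0∞} {c r ε : ℝ} {ℓ : ℕ} {x p : Fin ℓ → V}

lemma gdist_triangle (u v z : V) : gdist G w u z ≤ gdist G w u v + gdist G w v z :=
  ENNReal.le_iInf_add_iInf fun q q' ↦ (iInf_le _ (q.append q')).trans_eq (cost_append ..)

lemma gdist_comm (u v : V) : gdist G w u v = gdist G w v u := by
  have hle (u v : V) : gdist G w u v ≤ gdist G w v u :=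
    le_iInf fun q ↦ (iInf_le _ q.reverse).trans_eq (cost_reverse ..)
  exact (hle u v).antisymm (hle v u)

lemma IsLadder.length_le_two (hL : IsLadder (gdist G w) ε r ℓ x p) (hr : 0 < r) (hε : 2 ≤ ε) :
    ℓ ≤ 2 := by
  by_contra! hℓ
  let i₀ : Fin ℓ := ⟨0, by lia⟩
  let i₁ : Fin ℓ := ⟨1, by lia⟩
  let i₂ : Fin ℓ := ⟨2, hℓ⟩
  have hdist : gdist G w (p i₁) (x i₁) ≤ .ofReal ((1 + ε) * r) :=
    calc gdist G w (p i₁) (x i₁)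
        ≤ gdist G w (p i₁) (x i₂) + gdist G w (x i₂) (x i₁) := gdist_triangle ..
      _ ≤ gdist G w (p i₁) (x i₂) + (gdist G w (p i₀) (x i₂) + gdist G w (p i₀) (x i₁)) := by
          rw [gdist_comm (p i₀) (x i₂)]
          gcongr
          exact gdist_triangle ..
      _ ≤ .ofReal r + (.ofReal r + .ofReal r) :=
          add_le_add (hL.1 i₂ i₁ (by simp [i₁, i₂])) (add_le_add (hL.1 i₂ i₀ (by simp [i₀, i₂]))
            (hL.1 i₁ i₀ (by simp [i₀, i₁])))
      _ = .ofReal (r + (r + r)) := by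
          rw [ENNReal.ofReal_add hr.le (by positivity), ENNReal.ofReal_add hr.le hr.le]
      _ ≤ .ofReal ((1 + ε) * r) := ENNReal.ofReal_le_ofReal (by nlinarith)
  exact (hL.2 i₁).not_ge hdist

lemma IsLadder.length_le_two_rpow {k : ℕ} (hL : IsLadder (gdist G w) ε r ℓ x p)
    (hminor : ¬HasCompleteMinor G (k + 2)) (hε : 0 < ε) (hr : 0 < r) (hc_one : 1 ≤ c)
    (hc : c = (k + 2 * ⌈36 * ((k : ℝ) + 2) / ε⌉₊).choose (k + 1) * (12 + 72 / ε) * (k + 1)) :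
    (ℓ : ℝ) ≤ 2 ^ (c * (c + 1)) := by
  rcases le_or_gt 2 ε with hε2 | hε2
  · calc (ℓ : ℝ) ≤ 2 := mod_cast hL.length_le_two hr hε2
      _ ≤ 2 ^ (c * (c + 1)) := Real.self_le_rpow_of_one_le one_le_two (by nlinarith)
  · have ha : 7 / ε < (⌊7 / ε⌋₊ + 1 : ℕ) := mod_cast Nat.lt_floor_add_one (7 / ε)
    have ha' : (⌊7 / ε⌋₊ + 1 : ℕ) ≤ 7 / ε + 1 := by
      push_cast
      gcongr
      exact Nat.floor_le (by positivity)
    exact (Nat.cast_le.mpr (hL.length_lt hminor hε hr ha ha').le).trans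
      (ladderBound_le_two_rpow hε hε2 ha' hc)

end ScatterDimension

theorem stmt_0_general {V : Type} (h : ℕ) (ε : ℝ) (hε : 0 < ε) (G : SimpleGraph V)
    (w : Sym2 V → ℝ≥0∞) (hminor : ¬HasCompleteMinor G h) (c : ℝ)
    (hc : c = ((h - 2 + 2 * ⌈36 * (h : ℝ) / ε⌉₊).choose (h - 1) : ℝ) *
      (12 + 72 / ε) * ((h : ℝ) - 1)) :
    ∀ r : ℝ, 0 < r → ∀ (ℓ : ℕ) (x p : Fin ℓ → V),
      IsLadder (gdist G w) ε r ℓ x p → (ℓ : ℝ) ≤ (6 * c * (9 / ε + 2) ^ c) ^ (c + 1) := by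
  intro r hr ℓ x p hL
  match h with
  | 0 => exact absurd hasCompleteMinor_zero hminor
  | 1 =>
    have hℓ : ℓ = 0 := by
      by_contra hℓ
      exact hminor (hasCompleteMinor_one (x ⟨0, Nat.pos_of_ne_zero hℓ⟩))
    have hc_zero : c = 0 := by simpa using hc
    simp [hℓ, hc_zero]
  | k + 2 =>
    have hc_eq : c = (k + 2 * ⌈36 * ((k : ℝ) + 2) / ε⌉₊).choose (k + 1) * (12 + 72 / ε) *
        (k + 1) := by
      rw [hc, Nat.add_sub_cancel, Nat.add_succ_sub_one]
      push_cast
      ring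
    have hc_one : 1 ≤ c := (one_le_choose_mul k hε).trans_eq hc_eq.symm
    exact (hL.length_le_two_rpow hminor hε hr hc_one hc_eq).trans (two_rpow_le hε hc_one)

theorem stmt_0 {V : Type} [Fintype V] (h : ℕ) (hh : 1 ≤ h) (ε : ℝ) (hε : 0 < ε)
    (G : SimpleGraph V) (w : Sym2 V → ℝ≥0∞)
    (hminor : ¬ HasCompleteMinor G h)
    (c : ℝ)
    (hc : c = ((h - 2 + 2 * ⌈36 * (h : ℝ) / ε⌉₊).choose (h - 1) : ℝ) *
      (12 + 72 / ε) * ((h : ℝ) - 1)) :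
    ∀ r : ℝ, 0 < r → ∀ (ℓ : ℕ) (x p : Fin ℓ → V),
      IsLadder (gdist G w) ε r ℓ x p → (ℓ : ℝ) ≤ (6 * c * (9 / ε + 2) ^ c) ^ (c + 1) :=
  stmt_0_general h ε hε G w hminor c hc

end ScatterDim
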